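/- arXiv:2001.01607 — 2 statements merged into one kernel-verified Lean document; each statement's English description precedes it below -/
import Mathlib

section
/- Let G be a (theta, triangle)-free graph. If W = (H, {u, v}) is a 2-wheel in G such that uv ∉ E(G), then W is either a nested wheel or the cube. -/
open SimpleGraph

variable {V : Type} [Fintype V] [DecidableEq V]

/-- `p` is a chordless (induced) path in `G`: a path such that the only edges of `G`
between its vertices are the edges of the path. -/
def IsInducedPathW (G : SimpleGraph V) {a b : V} (p : G.Walk a b) : Prop :=
  p.IsPath ∧ ∀ u v : V, u ∈ p.support → v ∈ p.support → G.Adj u v → p.toSubgraph.Adj u v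

/-- A hole of length `n` in `G`: an induced (chordless) cycle of length `n ≥ 4`,
given by an injection of `ZMod n` into `G` whose adjacencies are exactly the consecutive ones. -/
def IsHoleEmb (G : SimpleGraph V) (n : ℕ) (f : ZMod n → V) : Prop :=
  4 ≤ n ∧ Function.Injective f ∧
    ∀ i j : ZMod n, G.Adj (f i) (f j) ↔ (j = i + 1 ∨ i = j + 1)

/-- `G` contains an even hole (induced even cycle of length at least 4). -/
def ContainsEvenHole (G : SimpleGraph V) : Prop :=
  ∃ (n : ℕ) (f : ZMod n → V), IsHoleEmb G n f ∧ Even n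

/-- `G` contains a square (hole of length 4). -/
def ContainsSquare (G : SimpleGraph V) : Prop :=
  ∃ f : ZMod 4 → V, IsHoleEmb G 4 f

/-- `G` contains a theta as an induced subgraph: three internally vertex-disjoint chordless
paths from `a` to `b`, each of length at least 2, with no edges between the paths other than
those incident to `a` or `b` specified by the paths. -/
def ContainsTheta (G : SimpleGraph V) : Prop :=
  ∃ (a b : V) (p₁ p₂ p₃ : G.Walk a b),
    (IsInducedPathW G p₁ ∧ IsInducedPathW G p₂ ∧ IsInducedPathW G p₃) ∧
    (2 ≤ p₁.length ∧ 2 ≤ p₂.length ∧ 2 ≤ p₃.length) ∧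
    (∀ w : V, ((w ∈ p₁.support ∧ w ∈ p₂.support) ∨ (w ∈ p₁.support ∧ w ∈ p₃.support) ∨
          (w ∈ p₂.support ∧ w ∈ p₃.support)) → (w = a ∨ w = b)) ∧
    (∀ u w : V, u ≠ a → u ≠ b → w ≠ a → w ≠ b →
      ((u ∈ p₁.support ∧ w ∈ p₂.support) ∨ (u ∈ p₁.support ∧ w ∈ p₃.support) ∨
       (u ∈ p₂.support ∧ w ∈ p₃.support)) → ¬G.Adj u w)

/-- `G` contains a prism as an induced subgraph. -/
def ContainsPrism (G : SimpleGraph V) : Prop :=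
  ∃ (a₁ b₁ a₂ b₂ a₃ b₃ : V) (p₁ : G.Walk a₁ b₁) (p₂ : G.Walk a₂ b₂) (p₃ : G.Walk a₃ b₃),
    (IsInducedPathW G p₁ ∧ IsInducedPathW G p₂ ∧ IsInducedPathW G p₃) ∧
    (1 ≤ p₁.length ∧ 1 ≤ p₂.length ∧ 1 ≤ p₃.length) ∧
    (G.Adj a₁ a₂ ∧ G.Adj a₂ a₃ ∧ G.Adj a₁ a₃) ∧
    (G.Adj b₁ b₂ ∧ G.Adj b₂ b₃ ∧ G.Adj b₁ b₃) ∧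
    (∀ w : V, ¬(w ∈ p₁.support ∧ w ∈ p₂.support) ∧ ¬(w ∈ p₁.support ∧ w ∈ p₃.support) ∧
          ¬(w ∈ p₂.support ∧ w ∈ p₃.support)) ∧
    (∀ u w : V, u ∈ p₁.support → w ∈ p₂.support → G.Adj u w →
      (u = a₁ ∧ w = a₂) ∨ (u = b₁ ∧ w = b₂)) ∧
    (∀ u w : V, u ∈ p₁.support → w ∈ p₃.support → G.Adj u w →
      (u = a₁ ∧ w = a₃) ∨ (u = b₁ ∧ w = b₃)) ∧
    (∀ u w : V, u ∈ p₂.support → w ∈ p₃.support → G.Adj u w →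
      (u = a₂ ∧ w = a₃) ∨ (u = b₂ ∧ w = b₃))

/-- `G` contains a pyramid as an induced subgraph. -/
def ContainsPyramid (G : SimpleGraph V) : Prop :=
  ∃ (a b₁ b₂ b₃ : V) (p₁ : G.Walk a b₁) (p₂ : G.Walk a b₂) (p₃ : G.Walk a b₃),
    (IsInducedPathW G p₁ ∧ IsInducedPathW G p₂ ∧ IsInducedPathW G p₃) ∧
    (1 ≤ p₁.length ∧ 1 ≤ p₂.length ∧ 1 ≤ p₃.length) ∧
    ((2 ≤ p₁.length ∧ 2 ≤ p₂.length) ∨ (2 ≤ p₁.length ∧ 2 ≤ p₃.length) ∨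
     (2 ≤ p₂.length ∧ 2 ≤ p₃.length)) ∧
    (G.Adj b₁ b₂ ∧ G.Adj b₂ b₃ ∧ G.Adj b₁ b₃) ∧
    (∀ w : V, ((w ∈ p₁.support ∧ w ∈ p₂.support) ∨ (w ∈ p₁.support ∧ w ∈ p₃.support) ∨
          (w ∈ p₂.support ∧ w ∈ p₃.support)) → w = a) ∧
    (∀ u w : V, u ∈ p₁.support → w ∈ p₂.support → u ≠ a → w ≠ a → G.Adj u w →
      u = b₁ ∧ w = b₂) ∧
    (∀ u w : V, u ∈ p₁.support → w ∈ p₃.support → u ≠ a → w ≠ a → G.Adj u w →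
      u = b₁ ∧ w = b₃) ∧
    (∀ u w : V, u ∈ p₂.support → w ∈ p₃.support → u ≠ a → w ≠ a → G.Adj u w →
      u = b₂ ∧ w = b₃)

/-- `G` contains the cube as an induced subgraph: a hole of length 6 together with
two non-adjacent vertices `u, v` outside it, `u` adjacent to the even positions and
`v` adjacent to the odd positions. -/
def ContainsCube (G : SimpleGraph V) : Prop :=
  ∃ (f : ZMod 6 → V) (u v : V), IsHoleEmb G 6 f ∧
    u ∉ Set.range f ∧ v ∉ Set.range f ∧ ¬G.Adj u v ∧
    (∀ m : ZMod 6, G.Adj u (f m) ↔ (m = 0 ∨ m = 2 ∨ m = 4)) ∧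
    (∀ m : ZMod 6, G.Adj v (f m) ↔ (m = 1 ∨ m = 3 ∨ m = 5))

/-- `G` contains an even wheel: a hole plus a vertex outside it having at least 3 and
an even number of neighbors on the hole. -/
def ContainsEvenWheel (G : SimpleGraph V) : Prop :=
  ∃ (n : ℕ) (f : ZMod n → V) (u : V), IsHoleEmb G n f ∧ u ∉ Set.range f ∧
    3 ≤ {m : ZMod n | G.Adj u (f m)}.ncard ∧ Even {m : ZMod n | G.Adj u (f m)}.ncard

/-- `G` contains a butterfly: a wheel `(H,v)` with `N_H(v) = {a,b,c,d}`,
`ab, cd ∈ E(G)` and `bc, da ∉ E(G)`. -/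
def ContainsButterfly (G : SimpleGraph V) : Prop :=
  ∃ (n : ℕ) (f : ZMod n → V) (u : V), IsHoleEmb G n f ∧ u ∉ Set.range f ∧
    ∃ i j : ZMod n, i ≠ j ∧ i ≠ j + 1 ∧ i + 1 ≠ j ∧ i + 1 ≠ j + 1 ∧
      ¬G.Adj (f (i + 1)) (f j) ∧ ¬G.Adj (f (j + 1)) (f i) ∧
      (∀ m : ZMod n, G.Adj u (f m) ↔ (m = i ∨ m = i + 1 ∨ m = j ∨ m = j + 1))

/-- A 2-wheel in `G`: a hole `f` together with two distinct centers `u, v` outside the hole,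
each having at least three neighbors on the hole. -/
def Is2WheelCfg (G : SimpleGraph V) (n : ℕ) (f : ZMod n → V) (u v : V) : Prop :=
  IsHoleEmb G n f ∧ u ≠ v ∧ u ∉ Set.range f ∧ v ∉ Set.range f ∧
  3 ≤ {m : ZMod n | G.Adj u (f m)}.ncard ∧ 3 ≤ {m : ZMod n | G.Adj v (f m)}.ncard

/-- The 2-wheel `(f, {u,v})` is nested: the hole splits at `f i` and `f (i+d)` into two arcs,
with all neighbors of `u` on one arc and all neighbors of `v` on the other. -/
def NestedCfg (G : SimpleGraph V) (n : ℕ) (f : ZMod n → V) (u v : V) : Prop :=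
  ∃ (i : ZMod n) (d : ℕ), 1 ≤ d ∧ d < n ∧
    (∀ m : ZMod n, G.Adj u (f m) → ∃ e : ℕ, e ≤ d ∧ m = i + (e : ZMod n)) ∧
    (∀ m : ZMod n, G.Adj v (f m) → ∃ e : ℕ, e ≤ n - d ∧ m = i + (d : ZMod n) + (e : ZMod n))

/-- The 2-wheel `(f, {u,v})` is the cube. -/
def CubeCfg (G : SimpleGraph V) (n : ℕ) (f : ZMod n → V) (u v : V) : Prop :=
  n = 6 ∧ ∃ i : ZMod n,
    (∀ m : ZMod n, G.Adj u (f m) ↔ (m = i ∨ m = i + 2 ∨ m = i + 4)) ∧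
    (∀ m : ZMod n, G.Adj v (f m) ↔ (m = i + 1 ∨ m = i + 3 ∨ m = i + 5))

/-- The 2-wheel `(f, {u,v})` is a cousin wheel: `N_H(u) = {h₁,h₂,h₃}` and
`N_H(v) = {h₂,h₃,h₄}` for four consecutive vertices of the hole (or with `u, v` swapped). -/
def CousinCfg (G : SimpleGraph V) (n : ℕ) (f : ZMod n → V) (u v : V) : Prop :=
  (∃ i : ZMod n,
    (∀ m : ZMod n, G.Adj u (f m) ↔ (m = i ∨ m = i + 1 ∨ m = i + 2)) ∧
    (∀ m : ZMod n, G.Adj v (f m) ↔ (m = i + 1 ∨ m = i + 2 ∨ m = i + 3))) ∨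
  (∃ i : ZMod n,
    (∀ m : ZMod n, G.Adj v (f m) ↔ (m = i ∨ m = i + 1 ∨ m = i + 2)) ∧
    (∀ m : ZMod n, G.Adj u (f m) ↔ (m = i + 1 ∨ m = i + 2 ∨ m = i + 3)))

/-- A `u`-sector of the hole `f`: a subpath from `f i` to `f (i+d)` (`1 ≤ d < n`)
whose two ends are adjacent to `u` and whose internal vertices are not. -/
def IsSector (G : SimpleGraph V) (n : ℕ) (f : ZMod n → V) (u : V) (i : ZMod n) (d : ℕ) : Prop :=
  1 ≤ d ∧ d < n ∧ G.Adj u (f i) ∧ G.Adj u (f (i + (d : ZMod n))) ∧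
    ∀ m : ℕ, 0 < m → m < d → ¬G.Adj u (f (i + (m : ZMod n)))

/-- The class 𝒞: (theta, prism, pyramid, butterfly)-free graphs in which every 2-wheel
with non-adjacent centers is a nested wheel or a cousin wheel. -/
def InClassC (G : SimpleGraph V) : Prop :=
  ¬ContainsTheta G ∧ ¬ContainsPrism G ∧ ¬ContainsPyramid G ∧ ¬ContainsButterfly G ∧
  ∀ (n : ℕ) (f : ZMod n → V) (u v : V), Is2WheelCfg G n f u v → ¬G.Adj u v →
    (NestedCfg G n f u v ∨ CousinCfg G n f u v)

/-- `G` contains `S_{k,k,k}` as an induced subgraph: a root `r` and three legs of `k` edges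
each, with no other adjacencies among these vertices. -/
def ContainsSpider (G : SimpleGraph V) (k : ℕ) : Prop :=
  ∃ (r : V) (f : Fin 3 → Fin k → V),
    (∀ (j : Fin 3) (m : Fin k), f j m ≠ r) ∧
    (∀ (j₁ : Fin 3) (m₁ : Fin k) (j₂ : Fin 3) (m₂ : Fin k),
      f j₁ m₁ = f j₂ m₂ → j₁ = j₂ ∧ m₁ = m₂) ∧
    (∀ (j : Fin 3) (m : Fin k), G.Adj r (f j m) ↔ (m : ℕ) = 0) ∧
    (∀ (j₁ : Fin 3) (m₁ : Fin k) (j₂ : Fin 3) (m₂ : Fin k),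
      G.Adj (f j₁ m₁) (f j₂ m₂) ↔
        (j₁ = j₂ ∧ ((m₁ : ℕ) + 1 = (m₂ : ℕ) ∨ (m₂ : ℕ) + 1 = (m₁ : ℕ))))

/-- A `k`-span-wheel in `G`: a hole `f` of length `n`, with `x = f 0` and `y = f p`
non-adjacent, the two paths `P_A = f 0, f 1, …, f p` and `P_B = f 0, f (n-1), …, f p`,
and centers `c 0, …, c (k-1)` outside the hole such that `{c i} ∪ {x,y}` is independent,
every center has at least three neighbors on the hole and neighbors in the interiors of
both `P_A` and `P_B`, and the neighbors of the centers appear along both `P_A` and `P_B`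
(from `x` to `y`) in the order of the centers. -/
def IsSpanWheel (G : SimpleGraph V) (k n p : ℕ) (f : ZMod n → V) (c : Fin k → V) : Prop :=
  IsHoleEmb G n f ∧
  2 ≤ p ∧ p ≤ n - 2 ∧
  ¬G.Adj (f 0) (f (p : ZMod n)) ∧
  Function.Injective c ∧
  (∀ i : Fin k, c i ∉ Set.range f) ∧
  (∀ i j : Fin k, i ≠ j → ¬G.Adj (c i) (c j)) ∧
  (∀ i : Fin k, ¬G.Adj (c i) (f 0)) ∧
  (∀ i : Fin k, ¬G.Adj (c i) (f (p : ZMod n))) ∧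
  (∀ i : Fin k, 3 ≤ {m : ZMod n | G.Adj (c i) (f m)}.ncard) ∧
  (∀ i : Fin k, ∃ a : ℕ, 0 < a ∧ a < p ∧ G.Adj (c i) (f (a : ZMod n))) ∧
  (∀ i : Fin k, ∃ b : ℕ, p < b ∧ b < n ∧ G.Adj (c i) (f (b : ZMod n))) ∧
  (∀ i j : Fin k, i < j → ∀ a₁ a₂ : ℕ, a₁ ≤ p → a₂ ≤ p →
    G.Adj (c i) (f (a₁ : ZMod n)) → G.Adj (c j) (f (a₂ : ZMod n)) → a₁ ≤ a₂) ∧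
  (∀ i j : Fin k, i < j → ∀ b₁ b₂ : ℕ, p ≤ b₁ → b₁ ≤ n → p ≤ b₂ → b₂ ≤ n →
    G.Adj (c i) (f (b₁ : ZMod n)) → G.Adj (c j) (f (b₂ : ZMod n)) → b₂ ≤ b₁)

/-- `X` separates `s` from `t` in `G`: neither is in `X` and every walk from `s` to `t`
meets `X`. -/
def Separates (G : SimpleGraph V) (X : Set V) (s t : V) : Prop :=
  s ∉ X ∧ t ∉ X ∧ ∀ p : G.Walk s t, ∃ w ∈ p.support, w ∈ X

/-- `X` is a minimal separator of `G`: for some pair `s, t` it is an inclusion-wise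
minimal `st`-separator. -/
def MinSeparator (G : SimpleGraph V) (X : Set V) : Prop :=
  ∃ s t : V, Separates G X s t ∧ ∀ Y ⊆ X, Separates G Y s t → Y = X

/-- `A` is a connected component of `G ∖ C` that is full to `C`. -/
def IsFullComponent (G : SimpleGraph V) (C A : Set V) : Prop :=
  A.Nonempty ∧ Disjoint A C ∧ (G.induce A).Connected ∧
  (∀ a ∈ A, ∀ w : V, G.Adj a w → w ∈ A ∪ C) ∧
  (∀ x ∈ C, ∃ a ∈ A, G.Adj x a)

/-- A tree decomposition of `G` with tree `T` and bags `B`. -/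
def IsTreeDecomp (G : SimpleGraph V) {ι : Type} (T : SimpleGraph ι) (B : ι → Finset V) : Prop :=
  T.IsTree ∧
  (∀ v : V, ∃ i, v ∈ B i) ∧
  (∀ u v : V, G.Adj u v → ∃ i, u ∈ B i ∧ v ∈ B i) ∧
  (∀ (v : V) (i j : ι), v ∈ B i → v ∈ B j →
    ∀ (p : T.Walk i j), p.IsPath → ∀ x ∈ p.support, v ∈ B x)

/-- The treewidth of a finite graph: the least `w` such that `G` has a tree decomposition
all of whose bags have size at most `w + 1`. -/
noncomputable def treewidth (G : SimpleGraph V) : ℕ :=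
  sInf {w : ℕ | ∃ (m : ℕ) (T : SimpleGraph (Fin m)) (B : Fin m → Finset V),
    IsTreeDecomp G T B ∧ ∀ i, (B i).card ≤ w + 1}

/-- A graph is chordal iff it has no hole. -/
def IsChordal (G : SimpleGraph V) : Prop :=
  ¬∃ (n : ℕ) (f : ZMod n → V), IsHoleEmb G n f

/-- `H` is obtained from `G` by a minimal fill-in (minimal chordal completion). -/
def IsMinimalChordalCompletion (G H : SimpleGraph V) : Prop :=
  G ≤ H ∧ IsChordal H ∧ ∀ H' : SimpleGraph V, G ≤ H' → H' ≤ H → IsChordal H' → H' = H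

/-- `Ω` is a potential maximal clique of `G`: a maximal clique of some minimal chordal
completion of `G`. -/
def IsPMC (G : SimpleGraph V) (Ω : Set V) : Prop :=
  ∃ H : SimpleGraph V, IsMinimalChordalCompletion G H ∧ H.IsClique Ω ∧
    ∀ Ω' : Set V, H.IsClique Ω' → Ω ⊆ Ω' → Ω' = Ω

/-- `n` satisfies the Ramsey property for `(t, k)`: every graph on `n` vertices has a
clique of size `t` or an independent set of size `k`. -/
def RamseyProp (n t k : ℕ) : Prop :=
  ∀ G : SimpleGraph (Fin n),
    (∃ S : Finset (Fin n), G.IsNClique t S) ∨ (∃ S : Finset (Fin n), Gᶜ.IsNClique k S)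

/-- The Ramsey number `R(t, k)`. -/
noncomputable def ramseyNumber (t k : ℕ) : ℕ := sInf {n : ℕ | RamseyProp n t k}

/-!
The neighbours of `u` cut the rim into `u`-sectors. Suppose some closed `u`-sector contains two
neighbours of `v`. A neighbour of `v` outside that sector would yield a third route, besides the two
inside the sector, between `u` and `v` (or three routes between `u` and that neighbour, if it is
next to an end of the sector), hence a theta; so all neighbours of `v` lie in the sector and the
wheel is nested. By symmetry we are left with the case where every closed sector of either center
contains at most one neighbour of the other. Then the neighbours of `u` and of `v` alternate along
the rim, and a theta appears unless consecutive ones are adjacent. So `u` sees the even and `v` the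
odd positions of an even rim; a rim of length at least 8 yields a theta, and one of length 4 gives
`u` only two neighbours.

Thetas are recognised from three pairwise anticomplete connected sets, each joining two fixed
non-adjacent vertices. Positions on the rim are integers read modulo `n`, so that arcs are
intervals.
-/

section ConnectedSets

variable {α : Type*} {G : SimpleGraph α} {S T : Set α} {a : α}

theorem connected_induce_insert (hS : (G.induce S).Connected) (ha : ∃ x ∈ S, G.Adj a x) :
    (G.induce (insert a S)).Connected := by
  obtain ⟨x, hx, hax⟩ := ha
  exact connected_induce_union (s := {a}) (by simp) hS.preconnected rfl hx hax

theorem isCompleteBetween_insert_right (ha : ∀ x ∈ S, G.Adj x a) (h : G.IsCompleteBetween S T) :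
    G.IsCompleteBetween S (insert a T) := by
  rintro x hx y (rfl | hy)
  exacts [ha x hx, h hx hy]

end ConnectedSets

section InducedPaths

variable {α β : Type} {G : SimpleGraph α} {G' : SimpleGraph β} {a b : α}

theorem isInducedPathW_of_length_eq_dist {p : G.Walk a b} (hp : p.length = G.dist a b) :
    IsInducedPathW G p := by
  have adj_of_lt : ∀ i j, i < j → j ≤ p.length → G.Adj (p.getVert i) (p.getVert j) →
      p.toSubgraph.Adj (p.getVert i) (p.getVert j) := by
    intro i j hij hj hadj
    have hshortcut := G.dist_le ((p.take i).append (.cons hadj (p.drop j)))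
    simp only [Walk.length_append, Walk.length_cons, Walk.take_length, Walk.drop_length]
      at hshortcut
    obtain rfl : j = i + 1 := by omega
    exact p.toSubgraph_adj_getVert (by omega)
  refine ⟨p.isPath_of_length_eq_dist hp, fun x y hx hy hxy => ?_⟩
  obtain ⟨i, rfl, hi⟩ := Walk.mem_support_iff_exists_getVert.mp hx
  obtain ⟨j, rfl, hj⟩ := Walk.mem_support_iff_exists_getVert.mp hy
  rcases lt_trichotomy i j with hij | rfl | hij
  · exact adj_of_lt i j hij hj hxy
  · exact (G.irrefl hxy).elim
  · exact (adj_of_lt j i hij hi hxy.symm).symm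

theorem IsInducedPathW.map {p : G.Walk a b} (hp : IsInducedPathW G p) (φ : G ↪g G') :
    IsInducedPathW G' (p.map φ.toHom) := by
  refine ⟨hp.1.map φ.injective, fun x y hx hy hxy => ?_⟩
  rw [Walk.support_map, List.mem_map] at hx hy
  obtain ⟨x, hx, rfl⟩ := hx
  obtain ⟨y, hy, rfl⟩ := hy
  rw [Walk.toSubgraph_map]
  exact ⟨x, y, hp.2 x y hx hy (φ.map_adj_iff.mp hxy), rfl, rfl⟩

end InducedPaths

section ThetaCriterion

variable {α : Type} {G : SimpleGraph α} {a b : α} {S S₁ S₂ S₃ : Set α}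

/-- `S` is a connected set of vertices through which `a` and `b` can be joined. It plays the role of
the interior of one path of a theta with ends `a` and `b`, without having to be a path itself. -/
structure Links (G : SimpleGraph α) (S : Set α) (a b : α) : Prop where
  connected : (G.induce S).Connected
  adj_left : ∃ x ∈ S, G.Adj a x
  adj_right : ∃ x ∈ S, G.Adj b x

theorem Links.exists_isInducedPathW (h : Links G S a b) :
    ∃ p : G.Walk a b, IsInducedPathW G p ∧ ∀ x ∈ p.support, x ≠ a → x ≠ b → x ∈ S := by
  have hconn : (G.induce (insert a (insert b S))).Connected := by
    obtain ⟨x, hx, hax⟩ := h.adj_left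
    exact connected_induce_insert (connected_induce_insert h.connected h.adj_right)
      ⟨x, .inr hx, hax⟩
  obtain ⟨p, hp⟩ := hconn.exists_walk_length_eq_dist ⟨a, by simp⟩ ⟨b, by simp⟩
  have interior_subset : ∀ x ∈ (p.map (Embedding.induce _).toHom).support,
      x ≠ a → x ≠ b → x ∈ S := by
    intro x hx hxa hxb
    rw [Walk.support_map, List.mem_map] at hx
    obtain ⟨⟨x, hxS⟩, -, rfl⟩ := hx
    exact (hxS.resolve_left hxa).resolve_left hxb
  exact ⟨_, (isInducedPathW_of_length_eq_dist hp).map _, interior_subset⟩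

-- Completeness in `Gᶜ` makes the three sets disjoint as well as anticomplete to one another, so
-- shortest paths through them form a theta.
theorem containsTheta_of_links (hne : a ≠ b) (hadj : ¬G.Adj a b)
    (h₁ : Links G S₁ a b) (h₂ : Links G S₂ a b) (h₃ : Links G S₃ a b)
    (h₁₂ : Gᶜ.IsCompleteBetween S₁ S₂) (h₁₃ : Gᶜ.IsCompleteBetween S₁ S₃)
    (h₂₃ : Gᶜ.IsCompleteBetween S₂ S₃) : ContainsTheta G := by
  have two_le_length (p : G.Walk a b) : 2 ≤ p.length := by
    by_contra hlt
    obtain h | h : p.length = 0 ∨ p.length = 1 := by omega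
    · exact hne (Walk.eq_of_length_eq_zero h)
    · exact hadj (Walk.adj_of_length_eq_one h)
  obtain ⟨p₁, hp₁, hS₁⟩ := h₁.exists_isInducedPathW
  obtain ⟨p₂, hp₂, hS₂⟩ := h₂.exists_isInducedPathW
  obtain ⟨p₃, hp₃, hS₃⟩ := h₃.exists_isInducedPathW
  refine ⟨a, b, p₁, p₂, p₃, ⟨hp₁, hp₂, hp₃⟩,
    ⟨two_le_length _, two_le_length _, two_le_length _⟩, fun w hw => ?_, ?_⟩
  · by_contra! hab
    obtain ⟨ha, hb⟩ := hab
    rcases hw with ⟨h, h'⟩ | ⟨h, h'⟩ | ⟨h, h'⟩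
    · exact (h₁₂ (hS₁ w h ha hb) (hS₂ w h' ha hb)).ne rfl
    · exact (h₁₃ (hS₁ w h ha hb) (hS₃ w h' ha hb)).ne rfl
    · exact (h₂₃ (hS₂ w h ha hb) (hS₃ w h' ha hb)).ne rfl
  · rintro x y hxa hxb hya hyb (⟨hx, hy⟩ | ⟨hx, hy⟩ | ⟨hx, hy⟩)
    · exact (h₁₂ (hS₁ x hx hxa hxb) (hS₂ y hy hya hyb)).2
    · exact (h₁₃ (hS₁ x hx hxa hxb) (hS₃ y hy hya hyb)).2
    · exact (h₂₃ (hS₂ x hx hxa hxb) (hS₃ y hy hya hyb)).2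

end ThetaCriterion

section Rim

variable {α : Type} {G : SimpleGraph α} {n : ℕ} {f : ZMod n → α} {u v : α}

theorem exists_intCast_eq_of_pos (hn : 0 < n) (a : ℤ) (m : ZMod n) :
    ∃ t : ℤ, a ≤ t ∧ t < a + n ∧ (t : ZMod n) = m := by
  have : NeZero n := ⟨hn.ne'⟩
  have hlt := ZMod.val_lt (m - (a : ZMod n))
  exact ⟨a + (m - (a : ZMod n)).val, by omega, by omega, by simp⟩

theorem IsHoleEmb.pos (hf : IsHoleEmb G n f) : 0 < n := by
  have := hf.1
  omega

theorem IsHoleEmb.adj_intCast_iff (hf : IsHoleEmb G n f) {s t : ℤ} (hst : s ≤ t)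
    (htn : t < s + n) : G.Adj (f s) (f t) ↔ t = s + 1 ∨ t + 1 = s + n := by
  have hn := hf.1
  have hsucc : (t : ZMod n) = s + 1 ↔ t = s + 1 := by
    rw [eq_comm, ← Int.cast_one, ← Int.cast_add, ZMod.intCast_eq_intCast_iff_dvd_sub]
    refine ⟨fun ⟨k, hk⟩ => ?_, fun h => by simp [h]⟩
    obtain rfl : k = 0 := by nlinarith
    omega
  have hpred : (s : ZMod n) = t + 1 ↔ t + 1 = s + n := by
    rw [← Int.cast_one, ← Int.cast_add, ZMod.intCast_eq_intCast_iff_dvd_sub]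
    refine ⟨fun ⟨k, hk⟩ => ?_, fun h => by simp [h]⟩
    obtain rfl : k = 1 := by nlinarith
    omega
  rw [hf.2.2, hsucc, hpred]

theorem IsHoleEmb.intCast_ne (hf : IsHoleEmb G n f) {s t : ℤ} (hst : s < t) (htn : t < s + n) :
    f s ≠ f t := by
  intro h
  have hdvd := (ZMod.intCast_eq_intCast_iff_dvd_sub s t n).mp (hf.2.1 h)
  have := Int.le_of_dvd (by omega) hdvd
  omega

theorem IsHoleEmb.compl_adj_intCast (hf : IsHoleEmb G n f) {s t : ℤ} (hst : s + 2 ≤ t)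
    (htn : t + 2 ≤ s + n) : Gᶜ.Adj (f s) (f t) := by
  refine ⟨hf.intCast_ne (by omega) (by omega), fun h => ?_⟩
  have := (hf.adj_intCast_iff (by omega) (by omega)).mp h
  omega

theorem IsHoleEmb.adj_succ (hf : IsHoleEmb G n f) (t : ℤ) : G.Adj (f t) (f (t + 1 : ℤ)) :=
  (hf.2.2 _ _).mpr (.inl (by push_cast; rfl))

/-- The vertices of the rim `f` at the positions `a, a + 1, …, b`. Positions are integers, read
modulo `n`, so an arc may pass through position `0`. -/
def rimArc (f : ZMod n → α) (a b : ℤ) : Set α := (fun t : ℤ => f t) '' Set.Icc a b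

theorem mem_rimArc {a b t : ℤ} (hat : a ≤ t) (htb : t ≤ b) : f t ∈ rimArc f a b :=
  ⟨t, ⟨hat, htb⟩, rfl⟩

theorem IsHoleEmb.connected_rimArc (hf : IsHoleEmb G n f) {a b : ℤ} (hab : a ≤ b) :
    (G.induce (rimArc f a b)).Connected := by
  induction b, hab using Int.leInduction with
  | base =>
    have harc : rimArc f a a = {f a} := by simp [rimArc]
    rw [harc]
    simp
  | succ b hab ih =>
    have harc : rimArc f a (b + 1) = insert (f (b + 1 : ℤ)) (rimArc f a b) := by
      rw [rimArc, ← Set.insert_Icc_right_eq_Icc_add_one (by omega), Set.image_insert_eq, rimArc]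
    rw [harc]
    exact connected_induce_insert ih ⟨_, mem_rimArc hab le_rfl, (hf.adj_succ b).symm⟩

theorem IsHoleEmb.isCompleteBetween_compl_rimArc (hf : IsHoleEmb G n f) {a b c d : ℤ}
    (hbc : b + 2 ≤ c) (hda : d + 2 ≤ a + n) :
    Gᶜ.IsCompleteBetween (rimArc f a b) (rimArc f c d) := by
  rintro _ ⟨s, ⟨has, hsb⟩, rfl⟩ _ ⟨t, ⟨hct, htd⟩, rfl⟩
  exact hf.compl_adj_intCast (by omega) (by omega)

/-- The positions on the rim `f` of the neighbours of `u`: a set of integers of period `n`. -/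
def rimNeighbors (G : SimpleGraph α) (f : ZMod n → α) (u : α) : Set ℤ := {t | G.Adj u (f t)}

theorem mem_rimNeighbors {t : ℤ} : t ∈ rimNeighbors G f u ↔ G.Adj u (f t) := Iff.rfl

theorem add_period_mem_rimNeighbors {t : ℤ} :
    t + n ∈ rimNeighbors G f u ↔ t ∈ rimNeighbors G f u := by
  simp [rimNeighbors]

theorem IsHoleEmb.succ_notMem_rimNeighbors (hf : IsHoleEmb G n f) (hTri : G.CliqueFree 3) {t : ℤ}
    (ht : t ∈ rimNeighbors G f u) : t + 1 ∉ rimNeighbors G f u := fun ht' =>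
  isIndepSet_neighborSet_of_triangleFree G hTri u ht ht' (hf.adj_succ t).ne (hf.adj_succ t)

theorem IsHoleEmb.add_two_le_of_mem_rimNeighbors (hf : IsHoleEmb G n f) (hTri : G.CliqueFree 3)
    {s t : ℤ} (hs : s ∈ rimNeighbors G f u) (ht : t ∈ rimNeighbors G f u) (hst : s < t) :
    s + 2 ≤ t := by
  have : t ≠ s + 1 := fun h => hf.succ_notMem_rimNeighbors hTri hs (h ▸ ht)
  omega

theorem compl_adj_of_notMem_rimNeighbors (hu : u ∉ Set.range f) {a b : ℤ}
    (h : ∀ t ∈ Set.Icc a b, t ∉ rimNeighbors G f u) : ∀ x ∈ rimArc f a b, Gᶜ.Adj x u := by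
  rintro _ ⟨t, ht, rfl⟩
  exact ⟨fun heq => hu ⟨_, heq⟩, fun hadj => h t ht hadj.symm⟩

theorem exists_mem_rimArc_adj {a b : ℤ} (h : (rimNeighbors G f u ∩ Set.Icc a b).Nonempty) :
    ∃ x ∈ rimArc f a b, G.Adj u x := by
  obtain ⟨t, hadj, ht⟩ := h
  exact ⟨_, Set.mem_image_of_mem _ ht, hadj⟩

theorem IsHoleEmb.exists_mem_rimArc_adj_left (hf : IsHoleEmb G n f) {w b : ℤ} (h : w + 1 ≤ b) :
    ∃ x ∈ rimArc f (w + 1) b, G.Adj (f w) x :=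
  ⟨_, mem_rimArc le_rfl h, hf.adj_succ w⟩

theorem IsHoleEmb.exists_mem_rimArc_adj_right (hf : IsHoleEmb G n f) {a w : ℤ} (h : a ≤ w - 1) :
    ∃ x ∈ rimArc f a (w - 1), G.Adj (f w) x :=
  ⟨_, mem_rimArc h le_rfl, by simpa using (hf.adj_succ (w - 1)).symm⟩

end Rim

section RimThetas

variable {α : Type} {G : SimpleGraph α} {n : ℕ} {f : ZMod n → α} {u v : α}

-- Theta with ends `u` and `v`.
theorem IsHoleEmb.containsTheta_of_three_arcs (hf : IsHoleEmb G n f) (hne : u ≠ v)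
    (huv : ¬G.Adj u v) {a₁ b₁ a₂ b₂ a₃ b₃ : ℤ}
    (h₁₂ : b₁ + 2 ≤ a₂) (h₂₃ : b₂ + 2 ≤ a₃) (h₃₁ : b₃ + 2 ≤ a₁ + n)
    (hu₁ : (rimNeighbors G f u ∩ Set.Icc a₁ b₁).Nonempty)
    (hu₂ : (rimNeighbors G f u ∩ Set.Icc a₂ b₂).Nonempty)
    (hu₃ : (rimNeighbors G f u ∩ Set.Icc a₃ b₃).Nonempty)
    (hv₁ : (rimNeighbors G f v ∩ Set.Icc a₁ b₁).Nonempty)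
    (hv₂ : (rimNeighbors G f v ∩ Set.Icc a₂ b₂).Nonempty)
    (hv₃ : (rimNeighbors G f v ∩ Set.Icc a₃ b₃).Nonempty) : ContainsTheta G := by
  have le_of_nonempty {a b : ℤ} (h : (rimNeighbors G f u ∩ Set.Icc a b).Nonempty) : a ≤ b :=
    Set.nonempty_Icc.mp h.right
  have links {a b : ℤ} (hu : (rimNeighbors G f u ∩ Set.Icc a b).Nonempty)
      (hv : (rimNeighbors G f v ∩ Set.Icc a b).Nonempty) : Links G (rimArc f a b) u v :=
    ⟨hf.connected_rimArc (le_of_nonempty hu), exists_mem_rimArc_adj hu, exists_mem_rimArc_adj hv⟩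
  have h₁ := le_of_nonempty hu₁
  have h₂ := le_of_nonempty hu₂
  have h₃ := le_of_nonempty hu₃
  exact containsTheta_of_links hne huv (links hu₁ hv₁) (links hu₂ hv₂) (links hu₃ hv₃)
    (hf.isCompleteBetween_compl_rimArc h₁₂ (by omega))
    (hf.isCompleteBetween_compl_rimArc (by omega) h₃₁)
    (hf.isCompleteBetween_compl_rimArc h₂₃ (by omega))

-- Theta with ends `f w` and `u`, one of whose paths runs through `v`.
theorem IsHoleEmb.containsTheta_of_isolated_neighbor (hf : IsHoleEmb G n f)
    (hu : u ∉ Set.range f) (hv : v ∉ Set.range f) {j w k a b : ℤ}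
    (hwv : w ∈ rimNeighbors G f v) (hwu : w ∉ rimNeighbors G f u)
    (hv_iso : ∀ t ∈ Set.Icc j k, t ∈ rimNeighbors G f v → t = w)
    (hu_left : (rimNeighbors G f u ∩ Set.Icc j (w - 1)).Nonempty)
    (hu_right : (rimNeighbors G f u ∩ Set.Icc (w + 1) k).Nonempty)
    (hka : k + 2 ≤ a) (hbj : b + 2 ≤ j + n)
    (hu_arc : (rimNeighbors G f u ∩ Set.Icc a b).Nonempty)
    (hv_arc : (rimNeighbors G f v ∩ Set.Icc a b).Nonempty) : ContainsTheta G := by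
  have hjw : j ≤ w - 1 := Set.nonempty_Icc.mp hu_left.right
  have hwk : w + 1 ≤ k := Set.nonempty_Icc.mp hu_right.right
  have hab : a ≤ b := Set.nonempty_Icc.mp hu_arc.right
  have links_left : Links G (rimArc f j (w - 1)) (f w) u :=
    ⟨hf.connected_rimArc hjw, hf.exists_mem_rimArc_adj_right hjw, exists_mem_rimArc_adj hu_left⟩
  have links_right : Links G (rimArc f (w + 1) k) (f w) u :=
    ⟨hf.connected_rimArc hwk, hf.exists_mem_rimArc_adj_left hwk, exists_mem_rimArc_adj hu_right⟩
  have links_arc : Links G (insert v (rimArc f a b)) (f w) u := by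
    obtain ⟨x, hx, hux⟩ := exists_mem_rimArc_adj hu_arc
    exact ⟨connected_induce_insert (hf.connected_rimArc hab) (exists_mem_rimArc_adj hv_arc),
      ⟨v, .inl rfl, G.adj_symm hwv⟩, ⟨x, .inr hx, hux⟩⟩
  refine containsTheta_of_links (fun h => hu ⟨_, h⟩) (fun h => hwu h.symm)
    links_left links_right links_arc
    (hf.isCompleteBetween_compl_rimArc (by omega) (by omega))
    (isCompleteBetween_insert_right (compl_adj_of_notMem_rimNeighbors hv fun t ht htv => ?_)
      (hf.isCompleteBetween_compl_rimArc (by omega) hbj))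
    (isCompleteBetween_insert_right (compl_adj_of_notMem_rimNeighbors hv fun t ht htv => ?_)
      (hf.isCompleteBetween_compl_rimArc hka (by omega)))
  all_goals
    obtain ⟨hlo, hhi⟩ := ht
    have := hv_iso t ⟨by omega, by omega⟩ htv
    omega

-- Theta with ends `f p` and `f q`, two of whose paths run through `u` and `v` respectively.
theorem IsHoleEmb.containsTheta_of_alternating_neighbors (hf : IsHoleEmb G n f)
    (hu : u ∉ Set.range f) (hv : v ∉ Set.range f) (hne : u ≠ v) (huv : ¬G.Adj u v) {a p q r : ℤ}
    (hap : a < p) (hpq : p + 2 ≤ q) (hqr : q < r) (hra : r + 2 ≤ a + n)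
    (ha : a ∈ rimNeighbors G f u) (hp : p ∈ rimNeighbors G f v)
    (hq : q ∈ rimNeighbors G f u) (hr : r ∈ rimNeighbors G f v)
    (hu_iso : ∀ t ∈ Set.Ioc a r, t ∈ rimNeighbors G f u → t = q)
    (hv_iso : ∀ t ∈ Set.Icc a q, t ∈ rimNeighbors G f v → t = p) : ContainsTheta G := by
  have links_arc : Links G (rimArc f (p + 1) (q - 1)) (f p) (f q) :=
    ⟨hf.connected_rimArc (by omega), hf.exists_mem_rimArc_adj_left (by omega),
      hf.exists_mem_rimArc_adj_right (by omega)⟩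
  have links_v : Links G (insert v (rimArc f (q + 1) r)) (f p) (f q) := by
    obtain ⟨x, hx, hqx⟩ := hf.exists_mem_rimArc_adj_left (w := q) (b := r) (by omega)
    exact ⟨connected_induce_insert (hf.connected_rimArc (by omega)) ⟨_, mem_rimArc hqr le_rfl, hr⟩,
      ⟨v, .inl rfl, G.adj_symm hp⟩, ⟨x, .inr hx, hqx⟩⟩
  have links_u : Links G (insert u (rimArc f a (p - 1))) (f p) (f q) := by
    obtain ⟨x, hx, hpx⟩ := hf.exists_mem_rimArc_adj_right (a := a) (w := p) (by omega)
    exact ⟨connected_induce_insert (hf.connected_rimArc (by omega))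
      ⟨_, mem_rimArc le_rfl (by omega), ha⟩, ⟨x, .inr hx, hpx⟩, ⟨u, .inl rfl, G.adj_symm hq⟩⟩
  have compl_adj_u {b c : ℤ} (hb : a < b) (hc : c ≤ r) (hq : q ∉ Set.Icc b c) :
      ∀ x ∈ rimArc f b c, Gᶜ.Adj x u :=
    compl_adj_of_notMem_rimNeighbors hu fun t ht htu =>
      hq (hu_iso t ⟨hb.trans_le ht.1, ht.2.trans hc⟩ htu ▸ ht)
  have compl_adj_v {b c : ℤ} (hb : a ≤ b) (hc : c ≤ q) (hp : p ∉ Set.Icc b c) :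
      ∀ x ∈ rimArc f b c, Gᶜ.Adj x v :=
    compl_adj_of_notMem_rimNeighbors hv fun t ht htv =>
      hp (hv_iso t ⟨hb.trans ht.1, ht.2.trans hc⟩ htv ▸ ht)
  have compl_uv : ∀ x ∈ insert u (rimArc f a (p - 1)), Gᶜ.Adj x v := by
    rintro x (rfl | hx)
    exacts [⟨hne, huv⟩, compl_adj_v le_rfl (by omega) (by simp) x hx]
  refine containsTheta_of_links (hf.intCast_ne (by omega) (by omega))
    (hf.compl_adj_intCast hpq (by omega)).2 links_arc links_u links_v
    (isCompleteBetween_insert_right (compl_adj_u (by omega) (by omega) (by simp))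
      (hf.isCompleteBetween_compl_rimArc (by omega) (by omega)).symm)
    (isCompleteBetween_insert_right (compl_adj_v (by omega) (by omega) (by simp))
      (hf.isCompleteBetween_compl_rimArc (by omega) (by omega)))
    (isCompleteBetween_insert_right compl_uv (isCompleteBetween_insert_right
      (compl_adj_u (by omega) le_rfl (by simp))
      (hf.isCompleteBetween_compl_rimArc (by omega) (by omega)).symm).symm)

end RimThetas

section Gaps

variable {A B : Set ℤ} {a b t : ℤ}

/-- `a` and `b` are consecutive elements of `A`. For the positions `A` of the neighbours of a center
on the rim, gaps are the sectors of that center. -/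
structure IsGap (A : Set ℤ) (a b : ℤ) : Prop where
  lt : a < b
  left_mem : a ∈ A
  right_mem : b ∈ A
  notMem : ∀ t ∈ Set.Ioo a b, t ∉ A

theorem exists_isGap_of_not_bdd (hbelow : ¬BddBelow A) (habove : ¬BddAbove A) (t : ℤ) :
    ∃ a b, IsGap A a b ∧ a ≤ t ∧ t < b := by
  obtain ⟨s, hs, hst⟩ := not_bddBelow_iff.mp hbelow t
  obtain ⟨s', hs', hts'⟩ := not_bddAbove_iff.mp habove t
  obtain ⟨a, ⟨ha, hat⟩, ha_max⟩ := Int.exists_greatest_of_bdd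
    (P := fun x => x ∈ A ∧ x ≤ t) ⟨t, fun _ hx => hx.2⟩ ⟨s, hs, hst.le⟩
  obtain ⟨b, ⟨hb, htb⟩, hb_min⟩ := Int.exists_least_of_bdd
    (P := fun x => x ∈ A ∧ t < x) ⟨t, fun _ hx => hx.2.le⟩ ⟨s', hs', hts'⟩
  refine ⟨a, b, ⟨hat.trans_lt htb, ha, hb, fun x ⟨hax, hxb⟩ hx => ?_⟩, hat, htb⟩
  rcases le_or_gt x t with hxt | htx
  · exact hax.not_ge (ha_max x ⟨hx, hxt⟩)
  · exact hxb.not_ge (hb_min x ⟨hx, htx⟩)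

theorem exists_isGap_right (hbelow : ¬BddBelow A) (habove : ¬BddAbove A) (ha : a ∈ A) :
    ∃ b, IsGap A a b := by
  obtain ⟨a', b, h, ha', hb⟩ := exists_isGap_of_not_bdd hbelow habove a
  obtain rfl | hlt := ha'.eq_or_lt
  · exact ⟨b, h⟩
  · exact (h.notMem a ⟨hlt, hb⟩ ha).elim

theorem exists_isGap_left (hbelow : ¬BddBelow A) (habove : ¬BddAbove A) (hb : b ∈ A) :
    ∃ a, IsGap A a b := by
  obtain ⟨a, b', h, ha, hb'⟩ := exists_isGap_of_not_bdd hbelow habove (b - 1)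
  obtain rfl | hlt : b = b' ∨ b < b' := by omega
  · exact ⟨a, h⟩
  · exact (h.notMem b ⟨by omega, hlt⟩ hb).elim

/-- Every closed gap of `A` contains at most one element of `B`: the condition on the neighbours of
the two centers that separates the cube from nested wheels. -/
def SparseOnGaps (A B : Set ℤ) : Prop := ∀ a b, IsGap A a b → (B ∩ Set.Icc a b).Subsingleton

theorem exists_isGap_of_not_sparseOnGaps (h : ¬SparseOnGaps A B) :
    ∃ a b, IsGap A a b ∧ ∃ x ∈ B, ∃ y ∈ B, a ≤ x ∧ x < y ∧ y ≤ b := by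
  simp only [SparseOnGaps, not_forall, Set.not_subsingleton_iff] at h
  obtain ⟨a, b, hab, hnt⟩ := h
  obtain ⟨x, ⟨hxB, hx⟩, y, ⟨hyB, hy⟩, hxy⟩ := hnt.exists_lt
  exact ⟨a, b, hab, x, hxB, y, hyB, hx.1, hxy, hy.2⟩

theorem SparseOnGaps.inter_Ioo_nonempty (hBA : SparseOnGaps B A) (hbelow : ¬BddBelow B)
    (habove : ¬BddAbove B) (h : IsGap A a b) : (B ∩ Set.Ioo a b).Nonempty := by
  obtain ⟨c, d, hcd, hca, had⟩ := exists_isGap_of_not_bdd hbelow habove a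
  refine ⟨d, hcd.right_mem, had, ?_⟩
  by_contra! hbd
  exact h.lt.ne (hBA c d hcd ⟨h.left_mem, hca, had.le⟩
    ⟨h.right_mem, hca.trans h.lt.le, hbd⟩)

theorem SparseOnGaps.notMem_of_mem (hAB : SparseOnGaps A B) (hBA : SparseOnGaps B A)
    (hA : ¬BddBelow A ∧ ¬BddAbove A) (hB : ¬BddBelow B ∧ ¬BddAbove B) (ht : t ∈ A) : t ∉ B := by
  intro htB
  obtain ⟨b, htb⟩ := exists_isGap_right hA.1 hA.2 ht
  obtain ⟨r, hr, htr, hrb⟩ := hBA.inter_Ioo_nonempty hB.1 hB.2 htb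
  exact htr.ne (hAB t b htb ⟨htB, le_rfl, htb.lt.le⟩ ⟨hr, htr.le, hrb.le⟩)

theorem mem_iff_even_sub_of_alternating (h : ∀ t, t + 1 ∈ A ↔ t ∉ A) (hb : b ∈ A) (t : ℤ) :
    t ∈ A ↔ Even (t - b) := by
  induction t using Int.inductionOn' (b := b) with
  | zero => simpa using hb
  | succ k _ ih => rw [h, ih, add_sub_right_comm, Int.even_add_one]
  | pred k _ ih =>
    rw [← sub_add_cancel k 1, h, add_sub_right_comm, Int.even_add_one] at ih
    exact not_iff_not.mp ih

end Gaps

section RimGaps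

variable {α : Type} {G : SimpleGraph α} {n : ℕ} {f : ZMod n → α} {u : α}

theorem not_bddAbove_rimNeighbors (hn : 0 < n) (hu : (rimNeighbors G f u).Nonempty) :
    ¬BddAbove (rimNeighbors G f u) := by
  obtain ⟨t, ht⟩ := hu
  refine not_bddAbove_iff.mpr fun x => ?_
  obtain ⟨s, hxs, -, hst⟩ := exists_intCast_eq_of_pos hn (x + 1) (t : ZMod n)
  exact ⟨s, by rwa [mem_rimNeighbors, hst], by omega⟩

theorem not_bddBelow_rimNeighbors (hn : 0 < n) (hu : (rimNeighbors G f u).Nonempty) :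
    ¬BddBelow (rimNeighbors G f u) := by
  obtain ⟨t, ht⟩ := hu
  refine not_bddBelow_iff.mpr fun x => ?_
  obtain ⟨s, -, hsx, hst⟩ := exists_intCast_eq_of_pos hn (x - n) (t : ZMod n)
  exact ⟨s, by rwa [mem_rimNeighbors, hst], by omega⟩

theorem IsGap.exists_third_rimNeighbor (hn : 0 < n)
    (hu : 3 ≤ {m : ZMod n | G.Adj u (f m)}.ncard) {a b : ℤ} (h : IsGap (rimNeighbors G f u) a b) :
    ∃ c ∈ rimNeighbors G f u, b < c ∧ c < a + n := by
  by_contra! hc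
  have hsub : {m : ZMod n | G.Adj u (f m)} ⊆ {(a : ZMod n), (b : ZMod n)} := by
    intro m hm
    obtain ⟨t, hat, htn, rfl⟩ := exists_intCast_eq_of_pos hn a m
    by_contra hne
    have hta : t ≠ a := fun h => hne (.inl (by rw [h]))
    have htb : t ≠ b := fun h => hne (.inr (by rw [h]; rfl))
    have := hc t hm
    exact h.notMem t ⟨by omega, by omega⟩ hm
  have := (Set.ncard_le_ncard hsub).trans (Set.ncard_insert_le _ _)
  rw [Set.ncard_singleton] at this
  omega

end RimGaps

section Nested

variable {α : Type} {G : SimpleGraph α} {n : ℕ} {f : ZMod n → α} {u v : α} {a b x y : ℤ}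

theorem nestedCfg_of_forall_notMem (hab : a < b) (hban : b < a + n)
    (hu : ∀ t ∈ Set.Ioo a b, t ∉ rimNeighbors G f u)
    (hv : ∀ t ∈ Set.Ioo b (a + n), t ∉ rimNeighbors G f v) : NestedCfg G n f u v := by
  have hn : 0 < n := by omega
  obtain ⟨d, hd⟩ := Int.eq_ofNat_of_zero_le (show 0 ≤ a + n - b by omega)
  refine ⟨b, d, by omega, by omega, fun m hm => ?_, fun m hm => ?_⟩
  · obtain ⟨t, hat, htn, rfl⟩ := exists_intCast_eq_of_pos hn (a + 1) m
    have hbt : b ≤ t := by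
      by_contra! htb
      exact hu t ⟨by omega, htb⟩ hm
    obtain ⟨e, rfl⟩ := Int.le.dest hbt
    exact ⟨e, by omega, by simp⟩
  · obtain ⟨t, hbt, htn, rfl⟩ := exists_intCast_eq_of_pos hn (b + 1) m
    have hat : b + d ≤ t := by
      by_contra! hta
      exact hv t ⟨by omega, by omega⟩ hm
    obtain ⟨e, rfl⟩ := Int.le.dest hat
    exact ⟨e, by omega, by simp⟩

theorem Is2WheelCfg.symm (hW : Is2WheelCfg G n f u v) : Is2WheelCfg G n f v u :=
  let ⟨hf, hne, hu, hv, hu3, hv3⟩ := hW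
  ⟨hf, hne.symm, hv, hu, hv3, hu3⟩

theorem Is2WheelCfg.notMem_inner_of_isGap (hW : Is2WheelCfg G n f u v)
    (hTheta : ¬ContainsTheta G) (hTri : G.CliqueFree 3) (huv : ¬G.Adj u v)
    (h : IsGap (rimNeighbors G f u) a b)
    (hx : x ∈ rimNeighbors G f v) (hy : y ∈ rimNeighbors G f v)
    (hax : a ≤ x) (hxy : x < y) (hyb : y ≤ b) :
    ∀ t ∈ Set.Icc (b + 2) (a + n - 2), t ∉ rimNeighbors G f v := by
  obtain ⟨hf, hne, -, -, hu3, -⟩ := hW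
  obtain ⟨c, hc, hbc, hcan⟩ := h.exists_third_rimNeighbor hf.pos hu3
  have han : a + n ∈ rimNeighbors G f u := add_period_mem_rimNeighbors.mpr h.left_mem
  have hxy' := hf.add_two_le_of_mem_rimNeighbors hTri hx hy hxy
  have hbc' := hf.add_two_le_of_mem_rimNeighbors hTri h.right_mem hc hbc
  have hcan' := hf.add_two_le_of_mem_rimNeighbors hTri hc han hcan
  intro t ht htv
  exact hTheta <| hf.containsTheta_of_three_arcs hne huv hxy' le_rfl
    (a₁ := a) (b₃ := a + n - 2) (by omega)
    ⟨a, h.left_mem, by simpa⟩ ⟨b, h.right_mem, by simpa⟩ ⟨c, hc, by omega, by omega⟩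
    ⟨x, hx, by simpa⟩ ⟨y, hy, by simpa⟩ ⟨t, htv, ht⟩

theorem Is2WheelCfg.succ_right_notMem_of_isGap (hW : Is2WheelCfg G n f u v)
    (hTheta : ¬ContainsTheta G) (hTri : G.CliqueFree 3) (huv : ¬G.Adj u v)
    (h : IsGap (rimNeighbors G f u) a b)
    (hx : x ∈ rimNeighbors G f v) (hy : y ∈ rimNeighbors G f v)
    (hax : a ≤ x) (hxy : x < y) (hyb : y ≤ b) : b + 1 ∉ rimNeighbors G f v := by
  intro hv_succ
  have inner := hW.notMem_inner_of_isGap hTheta hTri huv h hx hy hax hxy hyb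
  obtain ⟨hf, -, hu, hv, hu3, -⟩ := hW
  obtain ⟨c, hc, hbc, hcan⟩ := h.exists_third_rimNeighbor hf.pos hu3
  have han : a + n ∈ rimNeighbors G f u := add_period_mem_rimNeighbors.mpr h.left_mem
  have hxn : x + n ∈ rimNeighbors G f v := add_period_mem_rimNeighbors.mpr hx
  have hxy' := hf.add_two_le_of_mem_rimNeighbors hTri hx hy hxy
  have hbc' := hf.add_two_le_of_mem_rimNeighbors hTri h.right_mem hc hbc
  have hcan' := hf.add_two_le_of_mem_rimNeighbors hTri hc han hcan
  have isolated : ∀ t ∈ Set.Icc b c, t ∈ rimNeighbors G f v → t = b + 1 := by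
    rintro t ⟨hbt, htc⟩ htv
    by_contra hne
    have htb : t ≠ b := fun h => hf.succ_notMem_rimNeighbors hTri htv (h ▸ hv_succ)
    exact inner t ⟨by omega, by omega⟩ htv
  exact hTheta <| hf.containsTheta_of_isolated_neighbor hu hv hv_succ
    (hf.succ_notMem_rimNeighbors hTri h.right_mem) isolated
    ⟨b, h.right_mem, by simp⟩ ⟨c, hc, by simpa [add_assoc]⟩ (a := a + n) (b := x + n)
    (by omega) (by omega) ⟨a + n, han, by simpa⟩ ⟨x + n, hxn, by simpa⟩

theorem Is2WheelCfg.pred_left_notMem_of_isGap (hW : Is2WheelCfg G n f u v)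
    (hTheta : ¬ContainsTheta G) (hTri : G.CliqueFree 3) (huv : ¬G.Adj u v)
    (h : IsGap (rimNeighbors G f u) a b)
    (hx : x ∈ rimNeighbors G f v) (hy : y ∈ rimNeighbors G f v)
    (hax : a ≤ x) (hxy : x < y) (hyb : y ≤ b) : a - 1 ∉ rimNeighbors G f v := by
  intro hv_pred
  have inner := hW.notMem_inner_of_isGap hTheta hTri huv h hx hy hax hxy hyb
  obtain ⟨hf, -, hu, hv, hu3, -⟩ := hW
  obtain ⟨c, hc, hbc, hcan⟩ := h.exists_third_rimNeighbor hf.pos hu3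
  have han : a + n ∈ rimNeighbors G f u := add_period_mem_rimNeighbors.mpr h.left_mem
  have hcn : c - n ∈ rimNeighbors G f u := by
    rwa [← sub_add_cancel c (n : ℤ), add_period_mem_rimNeighbors] at hc
  have hxy' := hf.add_two_le_of_mem_rimNeighbors hTri hx hy hxy
  have hbc' := hf.add_two_le_of_mem_rimNeighbors hTri h.right_mem hc hbc
  have hcan' := hf.add_two_le_of_mem_rimNeighbors hTri hc han hcan
  have isolated : ∀ t ∈ Set.Icc (c - n) a, t ∈ rimNeighbors G f v → t = a - 1 := by
    rintro t ⟨hct, hta⟩ htv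
    by_contra hne
    have hta' : t ≠ a := fun h =>
      hf.succ_notMem_rimNeighbors hTri hv_pred (by rwa [sub_add_cancel, ← h])
    exact inner (t + n) ⟨by omega, by omega⟩ (add_period_mem_rimNeighbors.mpr htv)
  have hu_pred : a - 1 ∉ rimNeighbors G f u := fun hu_pred =>
    hf.succ_notMem_rimNeighbors hTri hu_pred (by simpa using h.left_mem)
  exact hTheta <| hf.containsTheta_of_isolated_neighbor hu hv hv_pred hu_pred isolated
    ⟨c - n, hcn, le_rfl, by omega⟩ ⟨a, h.left_mem, by simp⟩ (a := y) (b := b)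
    (by omega) (by omega) ⟨b, h.right_mem, by simpa⟩ ⟨y, hy, by simpa⟩

theorem Is2WheelCfg.notMem_outside_of_isGap (hW : Is2WheelCfg G n f u v)
    (hTheta : ¬ContainsTheta G) (hTri : G.CliqueFree 3) (huv : ¬G.Adj u v)
    (h : IsGap (rimNeighbors G f u) a b)
    (hx : x ∈ rimNeighbors G f v) (hy : y ∈ rimNeighbors G f v)
    (hax : a ≤ x) (hxy : x < y) (hyb : y ≤ b) :
    ∀ t ∈ Set.Ioo b (a + n), t ∉ rimNeighbors G f v := by
  rintro t ⟨hbt, hta⟩ htv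
  obtain rfl | rfl | ht : t = b + 1 ∨ t = a - 1 + n ∨ t ∈ Set.Icc (b + 2) (a + n - 2) := by
    rw [Set.mem_Icc]
    omega
  · exact hW.succ_right_notMem_of_isGap hTheta hTri huv h hx hy hax hxy hyb htv
  · exact hW.pred_left_notMem_of_isGap hTheta hTri huv h hx hy hax hxy hyb
      (add_period_mem_rimNeighbors.mp htv)
  · exact hW.notMem_inner_of_isGap hTheta hTri huv h hx hy hax hxy hyb t ht htv

theorem Is2WheelCfg.nestedCfg_of_not_sparseOnGaps (hW : Is2WheelCfg G n f u v)
    (hTheta : ¬ContainsTheta G) (hTri : G.CliqueFree 3) (huv : ¬G.Adj u v)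
    (h : ¬SparseOnGaps (rimNeighbors G f u) (rimNeighbors G f v)) : NestedCfg G n f u v := by
  obtain ⟨a, b, hab, x, hx, y, hy, hax, hxy, hyb⟩ := exists_isGap_of_not_sparseOnGaps h
  obtain ⟨c, -, hbc, hcan⟩ := hab.exists_third_rimNeighbor hW.1.pos hW.2.2.2.2.1
  exact nestedCfg_of_forall_notMem hab.lt (hbc.trans hcan) hab.notMem
    (hW.notMem_outside_of_isGap hTheta hTri huv hab hx hy hax hxy hyb)

theorem NestedCfg.symm (h : NestedCfg G n f u v) : NestedCfg G n f v u := by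
  obtain ⟨i, d, hd, hdn, hu, hv⟩ := h
  refine ⟨i + d, n - d, by omega, by omega, hv, fun m hm => ?_⟩
  obtain ⟨e, he, rfl⟩ := hu m hm
  exact ⟨e, by omega, by simp [Nat.cast_sub hdn.le]⟩

end Nested

section Cube

variable {α : Type} {G : SimpleGraph α} {n : ℕ} {f : ZMod n → α} {u v : α} {t : ℤ}

theorem Is2WheelCfg.not_bdd_left (hW : Is2WheelCfg G n f u v) :
    ¬BddBelow (rimNeighbors G f u) ∧ ¬BddAbove (rimNeighbors G f u) := by
  obtain ⟨hf, -, -, -, hu3, -⟩ := hW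
  obtain ⟨m, hm⟩ := Set.nonempty_of_ncard_ne_zero (show {m | G.Adj u (f m)}.ncard ≠ 0 by omega)
  have hne : (rimNeighbors G f u).Nonempty := ⟨m.cast, by simpa [rimNeighbors] using hm⟩
  exact ⟨not_bddBelow_rimNeighbors hf.pos hne, not_bddAbove_rimNeighbors hf.pos hne⟩

theorem Is2WheelCfg.pred_mem_of_sparseOnGaps (hW : Is2WheelCfg G n f u v)
    (hTheta : ¬ContainsTheta G) (huv : ¬G.Adj u v)
    (hAB : SparseOnGaps (rimNeighbors G f u) (rimNeighbors G f v))
    (hBA : SparseOnGaps (rimNeighbors G f v) (rimNeighbors G f u))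
    (ht : t ∈ rimNeighbors G f u) : t - 1 ∈ rimNeighbors G f v := by
  obtain ⟨hu_below, hu_above⟩ := hW.not_bdd_left
  obtain ⟨hv_below, hv_above⟩ := hW.symm.not_bdd_left
  obtain ⟨hf, hne, hu, hv, hu3, -⟩ := hW
  obtain ⟨a, hat⟩ := exists_isGap_left hu_below hu_above ht
  obtain ⟨b, htb⟩ := exists_isGap_right hu_below hu_above ht
  obtain ⟨p, hp, hap, hpt⟩ := hBA.inter_Ioo_nonempty hv_below hv_above hat
  obtain ⟨r, hr, htr, hrb⟩ := hBA.inter_Ioo_nonempty hv_below hv_above htb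
  obtain ⟨c, hc, htc, hcan⟩ := hat.exists_third_rimNeighbor hf.pos hu3
  have hbc : b ≤ c := by
    by_contra! hcb
    exact htb.notMem c ⟨htc, hcb⟩ hc
  by_contra hpred
  have hp_ne : p ≠ t - 1 := fun h => hpred (h ▸ hp)
  refine hTheta <| hf.containsTheta_of_alternating_neighbors hu hv hne huv hap
    (by omega) htr (by omega) hat.left_mem hp ht hr (fun s hs hsu => ?_)
    fun s hs hsv => hAB a t hat ⟨hsv, hs⟩ ⟨hp, hap.le, hpt.le⟩
  rcases lt_trichotomy s t with hst | hst | hst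
  · exact (hat.notMem s ⟨hs.1, hst⟩ hsu).elim
  · exact hst
  · exact (htb.notMem s ⟨hst, hs.2.trans_lt hrb⟩ hsu).elim

theorem Is2WheelCfg.mem_or_mem_of_sparseOnGaps (hW : Is2WheelCfg G n f u v)
    (hTheta : ¬ContainsTheta G) (huv : ¬G.Adj u v)
    (hAB : SparseOnGaps (rimNeighbors G f u) (rimNeighbors G f v))
    (hBA : SparseOnGaps (rimNeighbors G f v) (rimNeighbors G f u)) (t : ℤ) :
    t ∈ rimNeighbors G f u ∨ t ∈ rimNeighbors G f v := by
  obtain ⟨s, hs, hts⟩ := not_bddAbove_iff.mp hW.not_bdd_left.2 t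
  replace hts := hts.le
  induction t, hts using Int.leInductionDown with
  | base => exact .inl hs
  | pred t _ ih =>
    obtain htu | htv := ih
    · exact .inr (hW.pred_mem_of_sparseOnGaps hTheta huv hAB hBA htu)
    · exact .inl (hW.symm.pred_mem_of_sparseOnGaps hTheta (fun h => huv h.symm) hBA hAB htv)

theorem Is2WheelCfg.exists_parity_of_sparseOnGaps (hW : Is2WheelCfg G n f u v)
    (hTheta : ¬ContainsTheta G) (hTri : G.CliqueFree 3) (huv : ¬G.Adj u v)
    (hAB : SparseOnGaps (rimNeighbors G f u) (rimNeighbors G f v))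
    (hBA : SparseOnGaps (rimNeighbors G f v) (rimNeighbors G f u)) :
    ∃ b, (∀ t, t ∈ rimNeighbors G f u ↔ Even (t - b)) ∧
      ∀ t, t ∈ rimNeighbors G f v ↔ Odd (t - b) := by
  have notMem_u_iff (t : ℤ) : t ∉ rimNeighbors G f u ↔ t ∈ rimNeighbors G f v :=
    ⟨(hW.mem_or_mem_of_sparseOnGaps hTheta huv hAB hBA t).resolve_left,
      hBA.notMem_of_mem hAB hW.symm.not_bdd_left hW.not_bdd_left⟩
  have alternating (t : ℤ) : t + 1 ∈ rimNeighbors G f u ↔ t ∉ rimNeighbors G f u := by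
    refine ⟨fun hsucc ht => hW.1.succ_notMem_rimNeighbors hTri ht hsucc, fun ht => ?_⟩
    rw [notMem_u_iff] at ht
    exact not_not.mp fun hsucc =>
      hW.1.succ_notMem_rimNeighbors hTri ht ((notMem_u_iff _).mp hsucc)
  obtain ⟨b, hb, -⟩ := not_bddAbove_iff.mp hW.not_bdd_left.2 0
  have even_iff := mem_iff_even_sub_of_alternating alternating hb
  exact ⟨b, even_iff, fun t => by rw [← notMem_u_iff, even_iff, Int.not_even_iff_odd]⟩

theorem Is2WheelCfg.eq_six_of_parity (hW : Is2WheelCfg G n f u v) (hTheta : ¬ContainsTheta G)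
    {b : ℤ} (hu_even : ∀ t, t ∈ rimNeighbors G f u ↔ Even (t - b))
    (hv_odd : ∀ t, t ∈ rimNeighbors G f v ↔ Odd (t - b)) : n = 6 := by
  obtain ⟨hf, -, hu, hv, hu3, -⟩ := hW
  have hb : b ∈ rimNeighbors G f u := by simp [hu_even]
  have hn_even : Even (n : ℤ) := by
    simpa using (hu_even (b + n)).mp (add_period_mem_rimNeighbors.mpr hb)
  have hgap : IsGap (rimNeighbors G f u) b (b + 2) := by
    refine ⟨by omega, hb, by simp [hu_even], fun t ht => ?_⟩
    obtain rfl : t = b + 1 := by grind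
    simp [hu_even]
  have six_le : 6 ≤ n := by
    obtain ⟨c, hc, hbc, hcn⟩ := hgap.exists_third_rimNeighbor hf.pos hu3
    rw [hu_even] at hc
    grind
  by_contra hn
  have eight_le : 8 ≤ n := by grind
  refine hTheta <| hf.containsTheta_of_isolated_neighbor hu hv (w := b + 1) (j := b) (k := b + 2)
    (a := b + 4) (b := b + 5) (by simp [hv_odd]) (by simp [hu_even]) (fun t ht htv => ?_)
    ⟨b, hb, by simp⟩ ⟨b + 2, hgap.right_mem, by simp [add_assoc]⟩ (by omega) (by omega)
    ⟨b + 4, (hu_even _).mpr ⟨2, by ring⟩, by simp⟩ ⟨b + 5, (hv_odd _).mpr ⟨2, by ring⟩, by simp⟩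
  rw [hv_odd] at htv
  grind

theorem cubeCfg_of_parity {f : ZMod 6 → α} {b : ℤ}
    (hu_even : ∀ t, t ∈ rimNeighbors G f u ↔ Even (t - b))
    (hv_odd : ∀ t, t ∈ rimNeighbors G f v ↔ Odd (t - b)) : CubeCfg G 6 f u v := by
  have even_val : ∀ k : ZMod 6, Even k.val ↔ k = 0 ∨ k = 2 ∨ k = 4 := by decide
  have odd_val : ∀ k : ZMod 6, Odd k.val ↔ k = 1 ∨ k = 3 ∨ k = 5 := by decide
  have adj_u_iff (m : ZMod 6) : G.Adj u (f m) ↔ Even (m - (b : ZMod 6)).val := by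
    simpa [mem_rimNeighbors, ← Int.even_coe_nat] using hu_even (b + (m - (b : ZMod 6)).val)
  have adj_v_iff (m : ZMod 6) : G.Adj v (f m) ↔ Odd (m - (b : ZMod 6)).val := by
    simpa [mem_rimNeighbors, ← Int.odd_coe_nat] using hv_odd (b + (m - (b : ZMod 6)).val)
  refine ⟨rfl, b, fun m => ?_, fun m => ?_⟩
  · simp only [adj_u_iff, even_val, sub_eq_iff_eq_add', add_zero]
  · simp only [adj_v_iff, odd_val, sub_eq_iff_eq_add']

end Cube

theorem statement3_general {α : Type} (G : SimpleGraph α) (hTheta : ¬ContainsTheta G)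
    (hTri : G.CliqueFree 3) (n : ℕ) (f : ZMod n → α) (u v : α)
    (hW : Is2WheelCfg G n f u v) (huv : ¬G.Adj u v) :
    NestedCfg G n f u v ∨ CubeCfg G n f u v := by
  by_cases hAB : SparseOnGaps (rimNeighbors G f u) (rimNeighbors G f v)
  · by_cases hBA : SparseOnGaps (rimNeighbors G f v) (rimNeighbors G f u)
    · obtain ⟨b, hu_even, hv_odd⟩ := hW.exists_parity_of_sparseOnGaps hTheta hTri huv hAB hBA
      obtain rfl := hW.eq_six_of_parity hTheta hu_even hv_odd
      exact .inr (cubeCfg_of_parity hu_even hv_odd)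
    · exact .inl (hW.symm.nestedCfg_of_not_sparseOnGaps hTheta hTri (fun h => huv h.symm) hBA).symm
  · exact .inl (hW.nestedCfg_of_not_sparseOnGaps hTheta hTri huv hAB)

/-- In a (theta, triangle)-free graph, every 2-wheel with non-adjacent
centers is a nested wheel or the cube. -/
theorem statement3 (G : SimpleGraph V) (hTheta : ¬ContainsTheta G) (hTri : G.CliqueFree 3)
    (n : ℕ) (f : ZMod n → V) (u v : V)
    (hW : Is2WheelCfg G n f u v) (huv : ¬G.Adj u v) :
    NestedCfg G n f u v ∨ CubeCfg G n f u v :=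
  statement3_general G hTheta hTri n f u v hW huv
end

section
/- Let G be a (theta, prism, pyramid, even wheel, square)-free graph. If W = (H, {u, v}) is a 2-wheel in G such that uv ∉ E(G), then W is either a nested wheel or a cousin wheel. Moreover, if W is nested then |N_H(u) ∩ N_H(v)| ≤ 1. -/
open SimpleGraph

variable {V : Type} [Fintype V] [DecidableEq V]

/-!
Number the rim `0, …, n - 1` and fix a path between consecutive neighbors of `u` on it with
nonempty interior, a long sector of `u`. Closing it through `u` gives a second, shorter hole.

If the wheel is not nested, some long sector has neighbors of `v` both in its interior and outside
it. If the rest of the rim has no neighbor of `u` away from the sector, then parity and the absence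
of pyramids force `N_H(u)` to be three consecutive vertices. Otherwise `v` has no neighbor away from
the sector either, since a path from `u` to `v` through the rest of the rim would complete the
sector to a theta or a pyramid. So outside the sector `v` sees only the two rim vertices next to its
ends. Seeing both leads to a theta or a square; if it sees just one, then `v` has an even number of
neighbors on the sector, two because no wheel is even, consecutive because there is no theta, and
next to the outer neighbor because there is no pyramid. This is a cousin wheel.

Two common neighbors of `u` and `v` are adjacent, as there is no square. In a nested wheel they
would be the two ends of the arcs, so one of the arcs would be an edge and contain all three or more
neighbors of its center.
-/

section TwoWheel

variable {α ι : Type} {G : SimpleGraph α} {H : SimpleGraph ι}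

/-! ### Induced paths, thetas, pyramids and squares -/

/-- A chordless path of `G` from `a` to `b` with vertex set exactly `S`. -/
def HasInducedPath (G : SimpleGraph α) (a b : α) (S : Set α) : Prop :=
  ∃ p : G.Walk a b, IsInducedPathW G p ∧ ∀ x, x ∈ p.support ↔ x ∈ S

namespace HasInducedPath

variable {a b c x : α} {S : Set α}

lemma nil (G : SimpleGraph α) (a : α) : HasInducedPath G a a {a} :=
  ⟨.nil, ⟨by simp, by simp⟩, by simp⟩

lemma reverse (h : HasInducedPath G a b S) : HasInducedPath G b a S := by
  obtain ⟨p, ⟨hp, hchord⟩, hS⟩ := h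
  refine ⟨p.reverse, ⟨hp.reverse, fun x y hx hy hxy => ?_⟩, by simpa using hS⟩
  rw [Walk.support_reverse, List.mem_reverse] at hx hy
  simpa using hchord x y hx hy hxy

lemma cons (h : HasInducedPath G b c S) (hx : x ∉ S) (hadj : ∀ y ∈ S, G.Adj x y ↔ y = b) :
    HasInducedPath G x c (insert x S) := by
  obtain ⟨p, ⟨hp, hchord⟩, hS⟩ := h
  have hxb : G.Adj x b := (hadj b ((hS b).1 p.start_mem_support)).2 rfl
  refine ⟨.cons hxb p, ⟨hp.cons (by rwa [hS]), fun y z hy hz hyz => ?_⟩, by simp [hS]⟩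
  simp only [Walk.support_cons, List.mem_cons, hS] at hy hz
  rw [Walk.toSubgraph, Subgraph.sup_adj]
  rcases hy with rfl | hy <;> rcases hz with rfl | hz
  · exact absurd hyz G.irrefl
  · rw [(hadj z hz).1 hyz]; simp
  · rw [(hadj y hy).1 hyz.symm]; simp
  · exact .inr (hchord y z ((hS y).2 hy) ((hS z).2 hz) hyz)

lemma edge (hab : G.Adj a b) : HasInducedPath G a b {a, b} :=
  (nil G b).cons (by simpa using hab.ne) (by simp [hab])

lemma climb {G : SimpleGraph ℕ} {i j z : ℕ} {S : Set ℕ} (h : HasInducedPath G i z S)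
    (hij : i ≤ j) (hS : ∀ k ∈ Set.Ioc i j, k ∉ S)
    (hadj : ∀ k ∈ Set.Ico i j, ∀ y ∈ S ∪ Set.Icc i k, G.Adj (k + 1) y ↔ y = k) :
    HasInducedPath G j z (S ∪ Set.Icc i j) := by
  induction j, hij using Nat.le_induction with
  | base =>
    obtain ⟨p, -, hp⟩ := id h
    have : i ∈ S := (hp i).1 p.start_mem_support
    simpa [this] using h
  | succ j hij ih =>
    have prefixPath : HasInducedPath G j z (S ∪ Set.Icc i j) :=
      ih (fun k hk => hS k (by grind)) fun k hk => hadj k (by grind)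
    have split : S ∪ Set.Icc i (j + 1) = insert (j + 1) (S ∪ Set.Icc i j) := by grind
    rw [split]
    exact prefixPath.cons (by grind) (hadj j (by grind))

lemma Icc {G : SimpleGraph ℕ} {i j : ℕ} (hij : i ≤ j)
    (hadj : ∀ k ∈ Set.Ico i j, ∀ y ∈ Set.Icc i k, G.Adj (k + 1) y ↔ y = k) :
    HasInducedPath G i j (Set.Icc i j) := by
  have h := (nil G i).climb hij (by grind) (by grind)
  rw [Set.union_eq_self_of_subset_left (by grind)] at h
  exact h.reverse

end HasInducedPath

lemma two_le_length_of_not_adj {a b : α} (p : G.Walk a b) (hne : a ≠ b) (hadj : ¬G.Adj a b) :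
    2 ≤ p.length := by
  have h0 : p.length ≠ 0 := fun h => hne (Walk.eq_of_length_eq_zero h)
  have h1 : p.length ≠ 1 := fun h => hadj (Walk.adj_of_length_eq_one h)
  omega

lemma one_le_length_of_ne {a b : α} (p : G.Walk a b) (hne : a ≠ b) : 1 ≤ p.length :=
  Nat.one_le_iff_ne_zero.2 fun h => hne (Walk.eq_of_length_eq_zero h)

lemma containsTheta_of_hasInducedPath {a b : α} {S₁ S₂ S₃ : Set α} (hne : a ≠ b)
    (hadj : ¬G.Adj a b) (h₁ : HasInducedPath G a b S₁) (h₂ : HasInducedPath G a b S₂)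
    (h₃ : HasInducedPath G a b S₃)
    (h₁₂ : ∀ x ∈ S₁, ∀ y ∈ S₂, x = y ∨ G.Adj x y → x = a ∨ x = b ∨ y = a ∨ y = b)
    (h₁₃ : ∀ x ∈ S₁, ∀ y ∈ S₃, x = y ∨ G.Adj x y → x = a ∨ x = b ∨ y = a ∨ y = b)
    (h₂₃ : ∀ x ∈ S₂, ∀ y ∈ S₃, x = y ∨ G.Adj x y → x = a ∨ x = b ∨ y = a ∨ y = b) :
    ContainsTheta G := by
  obtain ⟨p₁, hp₁, hS₁⟩ := h₁
  obtain ⟨p₂, hp₂, hS₂⟩ := h₂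
  obtain ⟨p₃, hp₃, hS₃⟩ := h₃
  have two_le (p : G.Walk a b) : 2 ≤ p.length := two_le_length_of_not_adj p hne hadj
  refine ⟨a, b, p₁, p₂, p₃, ⟨hp₁, hp₂, hp₃⟩, ⟨two_le _, two_le _, two_le _⟩, ?_, ?_⟩ <;> grind

lemma containsPyramid_of_hasInducedPath {a b₁ b₂ b₃ : α} {S₁ S₂ S₃ : Set α} (hne₁ : a ≠ b₁)
    (hne₂ : a ≠ b₂) (hne₃ : a ≠ b₃) (hadj₂ : ¬G.Adj a b₂) (hadj₃ : ¬G.Adj a b₃)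
    (hb₁₂ : G.Adj b₁ b₂) (hb₂₃ : G.Adj b₂ b₃) (hb₁₃ : G.Adj b₁ b₃)
    (h₁ : HasInducedPath G a b₁ S₁) (h₂ : HasInducedPath G a b₂ S₂)
    (h₃ : HasInducedPath G a b₃ S₃)
    (h₁₂ : ∀ x ∈ S₁, ∀ y ∈ S₂, x = y ∨ G.Adj x y → x = a ∨ y = a ∨ x = b₁ ∧ y = b₂)
    (h₁₃ : ∀ x ∈ S₁, ∀ y ∈ S₃, x = y ∨ G.Adj x y → x = a ∨ y = a ∨ x = b₁ ∧ y = b₃)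
    (h₂₃ : ∀ x ∈ S₂, ∀ y ∈ S₃, x = y ∨ G.Adj x y → x = a ∨ y = a ∨ x = b₂ ∧ y = b₃) :
    ContainsPyramid G := by
  obtain ⟨p₁, hp₁, hS₁⟩ := h₁
  obtain ⟨p₂, hp₂, hS₂⟩ := h₂
  obtain ⟨p₃, hp₃, hS₃⟩ := h₃
  have ne_b₁₂ := hb₁₂.ne
  have ne_b₁₃ := hb₁₃.ne
  have ne_b₂₃ := hb₂₃.ne
  refine ⟨a, b₁, b₂, b₃, p₁, p₂, p₃, ⟨hp₁, hp₂, hp₃⟩,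
    ⟨one_le_length_of_ne _ hne₁, one_le_length_of_ne _ hne₂, one_le_length_of_ne _ hne₃⟩,
    .inr (.inr ⟨two_le_length_of_not_adj _ hne₂ hadj₂, two_le_length_of_not_adj _ hne₃ hadj₃⟩),
    ⟨hb₁₂, hb₂₃, hb₁₃⟩, ?_, ?_, ?_, ?_⟩ <;> grind

lemma containsSquare_of_adj {a b c d : α} (hac : a ≠ c) (hbd : b ≠ d) (ab : G.Adj a b)
    (bc : G.Adj b c) (cd : G.Adj c d) (da : G.Adj d a) (nac : ¬G.Adj a c) (nbd : ¬G.Adj b d) :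
    ContainsSquare G := by
  have nca : ¬G.Adj c a := fun h => nac h.symm
  have ndb : ¬G.Adj d b := fun h => nbd h.symm
  have square : Function.Injective ![a, b, c, d] ∧ ∀ i j : Fin 4,
      G.Adj (![a, b, c, d] i) (![a, b, c, d] j) ↔ j = i + 1 ∨ i = j + 1 := by
    constructor <;> intro i j <;> fin_cases i <;> fin_cases j <;>
      simp [ab, bc, cd, da, ab.symm, bc.symm, cd.symm, da.symm, nac, nbd, nca, ndb, hac, hbd,
        hac.symm, hbd.symm, ab.ne, bc.ne, cd.ne, da.ne, ab.ne', bc.ne', cd.ne', da.ne']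
  exact ⟨![a, b, c, d], le_rfl, square⟩

/-! ### Transfer of obstructions along an embedding -/

/-- (theta, pyramid, even wheel, square)-free graphs. -/
structure ObstructionFree (G : SimpleGraph α) : Prop where
  theta : ¬ContainsTheta G
  pyramid : ¬ContainsPyramid G
  evenWheel : ¬ContainsEvenWheel G
  square : ¬ContainsSquare G

/-- `h` embeds the non-isolated part of `H` into `G` as an induced subgraph. Isolated vertices are
disregarded so that a finite configuration can be modelled by a graph on all of `ℕ`. -/
structure IsSupportEmbedding (H : SimpleGraph ι) (G : SimpleGraph α) (h : ι → α) : Prop where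
  injOn : Set.InjOn h H.support
  adj_iff : ∀ x ∈ H.support, ∀ y ∈ H.support, G.Adj (h x) (h y) ↔ H.Adj x y

namespace IsSupportEmbedding

variable {h : ι → α}

/-- The graph homomorphism underlying a support embedding. -/
def toHom (e : IsSupportEmbedding H G h) : H →g G where
  toFun := h
  map_rel' {x y} hxy := (e.adj_iff x ⟨y, hxy⟩ y ⟨x, hxy.symm⟩).2 hxy

section Walk

variable {a b c d : ι} {p : H.Walk a b} {q : H.Walk c d}

lemma support_subset_support (hp : 1 ≤ p.length) {x : ι} (hx : x ∈ p.support) : x ∈ H.support :=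
  mem_support_of_mem_walk_support p (by rw [Walk.not_nil_iff_lt_length]; omega) hx

lemma mem_support_of_mem_support_map (e : IsSupportEmbedding H G h) (hp : 1 ≤ p.length)
    (hq : 1 ≤ q.length) {w : α} (hwp : w ∈ (p.map e.toHom).support)
    (hwq : w ∈ (q.map e.toHom).support) : ∃ x, x ∈ p.support ∧ x ∈ q.support ∧ e.toHom x = w := by
  rw [Walk.support_map, List.mem_map] at hwp hwq
  obtain ⟨x, hx, rfl⟩ := hwp
  obtain ⟨y, hy, hxy⟩ := hwq
  obtain rfl := e.injOn (support_subset_support hq hy) (support_subset_support hp hx) hxy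
  exact ⟨y, hx, hy, rfl⟩

lemma exists_adj_of_adj_map (e : IsSupportEmbedding H G h) (hp : 1 ≤ p.length)
    (hq : 1 ≤ q.length) {w z : α} (hw : w ∈ (p.map e.toHom).support)
    (hz : z ∈ (q.map e.toHom).support) (hwz : G.Adj w z) :
    ∃ x y, x ∈ p.support ∧ y ∈ q.support ∧ H.Adj x y ∧ e.toHom x = w ∧ e.toHom y = z := by
  rw [Walk.support_map, List.mem_map] at hw hz
  obtain ⟨x, hx, rfl⟩ := hw
  obtain ⟨y, hy, rfl⟩ := hz
  exact ⟨x, y, hx, hy, (e.adj_iff x (support_subset_support hp hx) y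
    (support_subset_support hq hy)).1 hwz, rfl, rfl⟩

lemma isInducedPathW_map (e : IsSupportEmbedding H G h) (hp : IsInducedPathW H p)
    (hlen : 1 ≤ p.length) : IsInducedPathW G (p.map e.toHom) := by
  refine ⟨?_, fun w z hw hz hwz => ?_⟩
  · rw [Walk.isPath_def, Walk.support_map]
    exact hp.1.support_nodup.map_on fun x hx y hy =>
      e.injOn (support_subset_support hlen hx) (support_subset_support hlen hy)
  · obtain ⟨x, y, hx, hy, hxy, rfl, rfl⟩ := e.exists_adj_of_adj_map hlen hlen hw hz hwz
    rw [Walk.toSubgraph_map]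
    exact ⟨x, y, hp.2 x y hx hy hxy, rfl, rfl⟩

end Walk

lemma containsTheta (e : IsSupportEmbedding H G h) (hH : ContainsTheta H) : ContainsTheta G := by
  obtain ⟨a, b, p₁, p₂, p₃, ⟨hp₁, hp₂, hp₃⟩, ⟨hl₁, hl₂, hl₃⟩, disjoint, nonadj⟩ := hH
  have one_le₁ : 1 ≤ p₁.length := one_le_two.trans hl₁
  have one_le₂ : 1 ≤ p₂.length := one_le_two.trans hl₂
  have one_le₃ : 1 ≤ p₃.length := one_le_two.trans hl₃
  refine ⟨_, _, p₁.map e.toHom, p₂.map e.toHom, p₃.map e.toHom,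
    ⟨e.isInducedPathW_map hp₁ one_le₁, e.isInducedPathW_map hp₂ one_le₂,
      e.isInducedPathW_map hp₃ one_le₃⟩, by simp [hl₁, hl₂, hl₃], ?_, ?_⟩
  · rintro w (⟨h₁, h₂⟩ | ⟨h₁, h₃⟩ | ⟨h₂, h₃⟩)
    · grind [e.mem_support_of_mem_support_map one_le₁ one_le₂ h₁ h₂]
    · grind [e.mem_support_of_mem_support_map one_le₁ one_le₃ h₁ h₃]
    · grind [e.mem_support_of_mem_support_map one_le₂ one_le₃ h₂ h₃]
  · rintro w z hwa hwb hza hzb (⟨h₁, h₂⟩ | ⟨h₁, h₃⟩ | ⟨h₂, h₃⟩) hwz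
    · obtain ⟨x, y, hx, hy, hxy, rfl, rfl⟩ := e.exists_adj_of_adj_map one_le₁ one_le₂ h₁ h₂ hwz
      exact nonadj x y (ne_of_apply_ne _ hwa) (ne_of_apply_ne _ hwb) (ne_of_apply_ne _ hza)
        (ne_of_apply_ne _ hzb) (.inl ⟨hx, hy⟩) hxy
    · obtain ⟨x, y, hx, hy, hxy, rfl, rfl⟩ := e.exists_adj_of_adj_map one_le₁ one_le₃ h₁ h₃ hwz
      exact nonadj x y (ne_of_apply_ne _ hwa) (ne_of_apply_ne _ hwb) (ne_of_apply_ne _ hza)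
        (ne_of_apply_ne _ hzb) (.inr (.inl ⟨hx, hy⟩)) hxy
    · obtain ⟨x, y, hx, hy, hxy, rfl, rfl⟩ := e.exists_adj_of_adj_map one_le₂ one_le₃ h₂ h₃ hwz
      exact nonadj x y (ne_of_apply_ne _ hwa) (ne_of_apply_ne _ hwb) (ne_of_apply_ne _ hza)
        (ne_of_apply_ne _ hzb) (.inr (.inr ⟨hx, hy⟩)) hxy

lemma containsPyramid (e : IsSupportEmbedding H G h) (hH : ContainsPyramid H) :
    ContainsPyramid G := by
  obtain ⟨a, b₁, b₂, b₃, p₁, p₂, p₃, ⟨hp₁, hp₂, hp₃⟩, ⟨hl₁, hl₂, hl₃⟩, two_le,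
    ⟨hb₁₂, hb₂₃, hb₁₃⟩, disjoint, h₁₂, h₁₃, h₂₃⟩ := hH
  refine ⟨_, _, _, _, p₁.map e.toHom, p₂.map e.toHom, p₃.map e.toHom,
    ⟨e.isInducedPathW_map hp₁ hl₁, e.isInducedPathW_map hp₂ hl₂, e.isInducedPathW_map hp₃ hl₃⟩,
    by simp only [Walk.length_map]; exact ⟨hl₁, hl₂, hl₃⟩, by simpa only [Walk.length_map],
    ⟨e.toHom.map_adj hb₁₂, e.toHom.map_adj hb₂₃, e.toHom.map_adj hb₁₃⟩, ?_, ?_, ?_, ?_⟩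
  · rintro w (⟨h₁, h₂⟩ | ⟨h₁, h₃⟩ | ⟨h₂, h₃⟩)
    · grind [e.mem_support_of_mem_support_map hl₁ hl₂ h₁ h₂]
    · grind [e.mem_support_of_mem_support_map hl₁ hl₃ h₁ h₃]
    · grind [e.mem_support_of_mem_support_map hl₂ hl₃ h₂ h₃]
  · intro w z hw hz hwa hza hwz
    obtain ⟨x, y, hx, hy, hxy, rfl, rfl⟩ := e.exists_adj_of_adj_map hl₁ hl₂ hw hz hwz
    exact (h₁₂ x y hx hy (ne_of_apply_ne _ hwa) (ne_of_apply_ne _ hza) hxy).imp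
      (congrArg _) (congrArg _)
  · intro w z hw hz hwa hza hwz
    obtain ⟨x, y, hx, hy, hxy, rfl, rfl⟩ := e.exists_adj_of_adj_map hl₁ hl₃ hw hz hwz
    exact (h₁₃ x y hx hy (ne_of_apply_ne _ hwa) (ne_of_apply_ne _ hza) hxy).imp
      (congrArg _) (congrArg _)
  · intro w z hw hz hwa hza hwz
    obtain ⟨x, y, hx, hy, hxy, rfl, rfl⟩ := e.exists_adj_of_adj_map hl₂ hl₃ hw hz hwz
    exact (h₂₃ x y hx hy (ne_of_apply_ne _ hwa) (ne_of_apply_ne _ hza) hxy).imp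
      (congrArg _) (congrArg _)

lemma isHoleEmb_comp (e : IsSupportEmbedding H G h) {n : ℕ} {f : ZMod n → ι}
    (hf : IsHoleEmb H n f) : IsHoleEmb G n (h ∘ f) := by
  obtain ⟨hn, hinj, hadj⟩ := hf
  have mem_support (i : ZMod n) : f i ∈ H.support := ⟨f (i + 1), (hadj i (i + 1)).2 (.inl rfl)⟩
  exact ⟨hn, fun i j hij => hinj (e.injOn (mem_support i) (mem_support j) hij),
    fun i j => (e.adj_iff _ (mem_support i) _ (mem_support j)).trans (hadj i j)⟩

lemma containsSquare (e : IsSupportEmbedding H G h) : ContainsSquare H → ContainsSquare G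
  | ⟨f, hf⟩ => ⟨h ∘ f, e.isHoleEmb_comp hf⟩

lemma containsEvenWheel (e : IsSupportEmbedding H G h) (hH : ContainsEvenWheel H) :
    ContainsEvenWheel G := by
  obtain ⟨n, f, u, hf, hu, three_le, even⟩ := hH
  have rim_mem (m : ZMod n) : f m ∈ H.support :=
    ⟨f (m + 1), (hf.2.2 m (m + 1)).2 (.inl rfl)⟩
  have u_mem : u ∈ H.support := by
    obtain ⟨m, hm⟩ := Set.nonempty_of_ncard_ne_zero (s := {m | H.Adj u (f m)}) (by omega)
    exact ⟨f m, hm⟩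
  refine ⟨n, h ∘ f, h u, e.isHoleEmb_comp hf, ?_, ?_⟩
  · rintro ⟨m, hm⟩
    exact hu ⟨m, e.injOn (rim_mem m) u_mem hm⟩
  · simpa only [Function.comp_apply, e.adj_iff u u_mem _ (rim_mem _)] using ⟨three_le, even⟩

end IsSupportEmbedding

lemma ObstructionFree.of_isSupportEmbedding {h : ι → α} (hG : ObstructionFree G)
    (e : IsSupportEmbedding H G h) : ObstructionFree H where
  theta := mt e.containsTheta hG.theta
  pyramid := mt e.containsPyramid hG.pyramid
  evenWheel := mt e.containsEvenWheel hG.evenWheel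
  square := mt e.containsSquare hG.square

/-! ### Two-wheel patterns -/

/-- Adjacency of `i` and `j` on the cycle `0, 1, …, n - 1`. -/
@[grind]
def CycAdj (n i j : ℕ) : Prop :=
  i + 1 = j ∨ j + 1 = i ∨ (i = 0 ∧ j + 1 = n) ∨ (j = 0 ∧ i + 1 = n)

lemma CycAdj.symm {n i j : ℕ} (h : CycAdj n i j) : CycAdj n j i := by
  grind

/-- The graph of a 2-wheel with non-adjacent centers: the rim is the cycle `0, 1, …, n - 1`, the
first center is the vertex `n`, with rim neighbors `U`, and the second center is the vertex `n + 1`,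
with rim neighbors `W`. All other vertices are isolated. -/
def twoWheelGraph (n : ℕ) (U W : ℕ → Prop) : SimpleGraph ℕ where
  Adj i j := (i < n ∧ j < n ∧ i ≠ j ∧ CycAdj n i j) ∨ (i = n ∧ j < n ∧ U j) ∨
    (j = n ∧ i < n ∧ U i) ∨ (i = n + 1 ∧ j < n ∧ W j) ∨ (j = n + 1 ∧ i < n ∧ W i)
  symm := ⟨fun i j h => by grind⟩
  loopless := ⟨fun i h => by grind⟩

variable {n : ℕ} {U W : ℕ → Prop}

@[grind =]
lemma twoWheelGraph_adj {i j : ℕ} : (twoWheelGraph n U W).Adj i j ↔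
    (i < n ∧ j < n ∧ i ≠ j ∧ CycAdj n i j) ∨ (i = n ∧ j < n ∧ U j) ∨ (j = n ∧ i < n ∧ U i) ∨
      (i = n + 1 ∧ j < n ∧ W j) ∨ (j = n + 1 ∧ i < n ∧ W i) :=
  Iff.rfl

lemma lt_of_mem_support_twoWheelGraph {k : ℕ} (hk : k ∈ (twoWheelGraph n U W).support) :
    k < n ∨ k = n ∨ k = n + 1 := by
  obtain ⟨j, hj⟩ := hk
  grind

lemma HasInducedPath.arc {i j : ℕ} (hij : i ≤ j) (hj : j < n) (h : 0 < i ∨ j + 1 < n) :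
    HasInducedPath (twoWheelGraph n U W) i j (Set.Icc i j) :=
  .Icc hij (by grind)

lemma cycAdj_val_iff (hn : 2 ≤ n) (i j : ZMod n) :
    CycAdj n i.val j.val ↔ j = i + 1 ∨ i = j + 1 := by
  have : Fact (1 < n) := ⟨hn⟩
  have eq_add_one (i j : ZMod n) : j = i + 1 ↔ i.val + 1 = j.val ∨ j.val = 0 ∧ i.val + 1 = n := by
    rw [← (ZMod.val_injective n).eq_iff, ZMod.val_add, ZMod.val_one n]
    have hi := i.val_lt
    have hj := j.val_lt
    rcases Nat.lt_or_ge (i.val + 1) n with h | h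
    · rw [Nat.mod_eq_of_lt h]; omega
    · rw [show i.val + 1 = n by omega, Nat.mod_self]; omega
  rw [eq_add_one, eq_add_one]
  grind

lemma isHoleEmb_of_cycAdj {g : ℕ → α} (hn : 4 ≤ n) (hinj : Set.InjOn g (Set.Iio n))
    (hadj : ∀ i < n, ∀ j < n, G.Adj (g i) (g j) ↔ CycAdj n i j) :
    IsHoleEmb G n fun m : ZMod n => g m.val := by
  have : NeZero n := ⟨by omega⟩
  refine ⟨hn, fun i j hij => ZMod.val_injective n (hinj i.val_lt j.val_lt hij), fun i j => ?_⟩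
  rw [hadj _ i.val_lt _ j.val_lt, cycAdj_val_iff (by omega)]

lemma ncard_setOf_val (n : ℕ) [NeZero n] (P : ℕ → Prop) :
    {m : ZMod n | P m.val}.ncard = {k | k < n ∧ P k}.ncard := by
  rw [← Set.ncard_image_of_injective _ (ZMod.val_injective n)]
  congr 1
  ext k
  constructor
  · rintro ⟨m, hm, rfl⟩
    exact ⟨m.val_lt, hm⟩
  · rintro ⟨hk, hP⟩
    exact ⟨k, by simpa [ZMod.val_cast_of_lt hk], ZMod.val_cast_of_lt hk⟩

lemma containsEvenWheel_of_cycAdj {g : ℕ → α} {c : α} (hn : 4 ≤ n)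
    (hinj : Set.InjOn g (Set.Iio n))
    (hadj : ∀ i < n, ∀ j < n, G.Adj (g i) (g j) ↔ CycAdj n i j) (hc : ∀ k < n, g k ≠ c)
    (three_le : 3 ≤ {k | k < n ∧ G.Adj c (g k)}.ncard)
    (even : Even {k | k < n ∧ G.Adj c (g k)}.ncard) : ContainsEvenWheel G := by
  have : NeZero n := ⟨by omega⟩
  rw [← ncard_setOf_val n fun k => G.Adj c (g k)] at three_le even
  refine ⟨n, _, c, isHoleEmb_of_cycAdj hn hinj hadj, ?_, three_le, even⟩
  rintro ⟨m, hm⟩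
  exact hc _ m.val_lt hm

/-- The rim neighborhoods `U` and `W` of the two centers of a 2-wheel with rim length `n` and
non-adjacent centers that contains none of the obstructions. -/
structure IsFreeTwoWheel (n : ℕ) (U W : ℕ → Prop) : Prop where
  four_le : 4 ≤ n
  free : ObstructionFree (twoWheelGraph n U W)
  three_le_left : 3 ≤ {k | k < n ∧ U k}.ncard
  three_le_right : 3 ≤ {k | k < n ∧ W k}.ncard

/-- `σ` restricts to an automorphism of the cycle `0, 1, …, n - 1`. -/
structure IsRimSymmetry (n : ℕ) (σ : ℕ → ℕ) : Prop where
  bijOn : Set.BijOn σ (Set.Iio n) (Set.Iio n)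
  cycAdj_iff : ∀ i < n, ∀ j < n, CycAdj n (σ i) (σ j) ↔ CycAdj n i j

/-- Rotation of the rim by `s ≤ n`. -/
@[grind]
def rimRotate (n s k : ℕ) : ℕ := if k + s < n then k + s else k + s - n

/-- Reflection of the rim exchanging `0` and `d`. -/
@[grind]
def rimReflect (n d k : ℕ) : ℕ := if k ≤ d then d - k else n + d - k

lemma isRimSymmetry_rimRotate {s : ℕ} (hn : 4 ≤ n) (hs : s ≤ n) :
    IsRimSymmetry n (rimRotate n s) where
  bijOn := ⟨fun k (hk : k < n) => show _ < n by grind,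
    fun i (hi : i < n) j (hj : j < n) hij => by grind,
    fun k (hk : k < n) => ⟨rimRotate n (n - s) k, show _ < n by grind, by grind⟩⟩
  cycAdj_iff i hi j hj := by unfold rimRotate CycAdj; split <;> split <;> omega

lemma isRimSymmetry_rimReflect {d : ℕ} (hn : 4 ≤ n) (hd : d < n) :
    IsRimSymmetry n (rimReflect n d) where
  bijOn := ⟨fun k (_ : k < n) => show _ < n by grind,
    fun i (hi : i < n) j (hj : j < n) hij => by grind,
    fun k (hk : k < n) => ⟨rimReflect n d k, show _ < n by grind, by grind⟩⟩
  cycAdj_iff i hi j hj := by unfold rimReflect CycAdj; split <;> split <;> omega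

lemma IsRimSymmetry.ncard_comp {σ : ℕ → ℕ} (hσ : IsRimSymmetry n σ) (P : ℕ → Prop) :
    {k | k < n ∧ P (σ k)}.ncard = {k | k < n ∧ P k}.ncard := by
  have image_eq : σ '' {k | k < n ∧ P (σ k)} = {k | k < n ∧ P k} := by
    ext k
    constructor
    · rintro ⟨j, ⟨hj, hP⟩, rfl⟩
      exact ⟨hσ.bijOn.mapsTo hj, hP⟩
    · rintro ⟨hk, hP⟩
      obtain ⟨j, hj, rfl⟩ := hσ.bijOn.surjOn hk
      exact ⟨j, ⟨hj, hP⟩, rfl⟩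
  rw [← image_eq, (hσ.bijOn.injOn.mono fun k hk => hk.1).ncard_image]

namespace IsFreeTwoWheel

lemma swap (h : IsFreeTwoWheel n U W) : IsFreeTwoWheel n W U where
  four_le := h.four_le
  free := by
    refine h.free.of_isSupportEmbedding
      (h := fun k => if k = n then n + 1 else if k = n + 1 then n else k) ⟨?_, ?_⟩
    · intro i _ j _
      grind
    · intro i hi j hj
      have := lt_of_mem_support_twoWheelGraph hi
      have := lt_of_mem_support_twoWheelGraph hj
      grind
  three_le_left := h.three_le_right
  three_le_right := h.three_le_left

lemma reindex {σ : ℕ → ℕ} (h : IsFreeTwoWheel n U W) (hσ : IsRimSymmetry n σ) :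
    IsFreeTwoWheel n (fun k => U (σ k)) (fun k => W (σ k)) where
  four_le := h.four_le
  free := by
    have maps (k : ℕ) (hk : k < n) : σ k < n := hσ.bijOn.mapsTo hk
    have inj (i j : ℕ) (hi : i < n) (hj : j < n) : σ i = σ j ↔ i = j :=
      hσ.bijOn.injOn.eq_iff hi hj
    have cycAdj_iff := hσ.cycAdj_iff
    refine h.free.of_isSupportEmbedding (h := fun k => if k < n then σ k else k) ⟨?_, ?_⟩
    · intro i _ j _
      grind
    · intro i hi j hj
      rcases lt_of_mem_support_twoWheelGraph hi with hi | rfl | rfl <;>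
        rcases lt_of_mem_support_twoWheelGraph hj with hj | rfl | rfl <;>
        grind
  three_le_left := (hσ.ncard_comp U).symm ▸ h.three_le_left
  three_le_right := (hσ.ncard_comp W).symm ▸ h.three_le_right

lemma rotate (h : IsFreeTwoWheel n U W) {s : ℕ} (hs : s ≤ n) :
    IsFreeTwoWheel n (fun k => U (rimRotate n s k)) (fun k => W (rimRotate n s k)) :=
  h.reindex (isRimSymmetry_rimRotate h.four_le hs)

lemma reflect (h : IsFreeTwoWheel n U W) {d : ℕ} (hd : d < n) :
    IsFreeTwoWheel n (fun k => U (rimReflect n d k)) (fun k => W (rimReflect n d k)) :=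
  h.reindex (isRimSymmetry_rimReflect h.four_le hd)

lemma odd_ncard_right (h : IsFreeTwoWheel n U W) : Odd {k | k < n ∧ W k}.ncard := by
  by_contra hodd
  have adj_eq : {k | k < n ∧ (twoWheelGraph n U W).Adj (n + 1) k} = {k | k < n ∧ W k} := by
    ext k; grind
  refine h.free.evenWheel (containsEvenWheel_of_cycAdj (g := id) (c := n + 1) h.four_le
    Function.injective_id.injOn (fun i hi j hj => ?_) (fun k hk => ?_) ?_ ?_)
  · have := h.four_le
    grind
  · grind
  · exact adj_eq ▸ h.three_le_right
  · exact adj_eq ▸ Nat.not_odd_iff_even.1 hodd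

lemma exists_right_ne (h : IsFreeTwoWheel n U W) (a b : ℕ) :
    ∃ k < n, W k ∧ k ≠ a ∧ k ≠ b := by
  by_contra! hab
  have subset : {k | k < n ∧ W k} ⊆ {a, b} := fun k hk => by grind
  have le_two : {k | k < n ∧ W k}.ncard ≤ 2 := calc
    _ ≤ ({a, b} : Set ℕ).ncard := Set.ncard_le_ncard subset
    _ ≤ ({b} : Set ℕ).ncard + 1 := Set.ncard_insert_le a {b}
    _ = 2 := by rw [Set.ncard_singleton]
  exact absurd h.three_le_right (by omega)

end IsFreeTwoWheel

namespace IsFreeTwoWheel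

lemma cycAdj_of_common (h : IsFreeTwoWheel n U W) {a b : ℕ} (ha : a < n) (hb : b < n)
    (hab : a ≠ b) (hUa : U a) (hWa : W a) (hUb : U b) (hWb : W b) : CycAdj n a b := by
  by_contra hcyc
  exact h.free.square (containsSquare_of_adj (a := n) (b := a) (c := n + 1) (d := b)
    (by grind) hab (by grind) (by grind) (by grind) (by grind) (by grind) (by grind))

lemma exists_right_not_left (h : IsFreeTwoWheel n U W) : ∃ k < n, W k ∧ ¬U k := by
  by_contra! hsub
  obtain ⟨a, ha, hWa, -⟩ := h.exists_right_ne 0 0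
  obtain ⟨b, hb, hWb, hba, -⟩ := h.exists_right_ne a a
  obtain ⟨c, hc, hWc, hca, hcb⟩ := h.exists_right_ne a b
  have common (i j : ℕ) (hi : i < n) (hj : j < n) (hij : i ≠ j) (hWi : W i) (hWj : W j) :
      CycAdj n i j := h.cycAdj_of_common hi hj hij (hsub i hi hWi) hWi (hsub j hj hWj) hWj
  have four_le := h.four_le
  grind

lemma false_of_right_eq_zero_pair (h : IsFreeTwoWheel n U W) {c : ℕ} (hc : 2 ≤ c)
    (hcn : c + 2 < n) (hW : ∀ k < n, W k ↔ k = 0 ∨ k = c ∨ k = c + 1) : False := by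
  have center : HasInducedPath (twoWheelGraph n U W) 0 (n + 1) {0, n + 1} := .edge (by grind)
  have forward : HasInducedPath (twoWheelGraph n U W) 0 c (Set.Icc 0 c) :=
    .arc c.zero_le (by omega) (by omega)
  have backward : HasInducedPath (twoWheelGraph n U W) 0 (c + 1)
      (insert 0 (Set.Icc (c + 1) (n - 1))) :=
    (HasInducedPath.arc (by omega) (by omega) (by omega)).reverse.cons (by grind) (by grind)
  exact h.free.pyramid (containsPyramid_of_hasInducedPath (by omega) (by omega) (by omega)
    (by grind) (by grind) (by grind) (by grind) (by grind) center forward backward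
    (by grind) (by grind) (by grind))

lemma cycAdj_of_right_eq_triple (h : IsFreeTwoWheel n U W) {a c : ℕ} (ha : a < n) (hc : c + 1 < n)
    (hW : ∀ k < n, W k ↔ k = a ∨ k = c ∨ k = c + 1) :
    CycAdj n a c ∨ CycAdj n a (c + 1) := by
  by_contra! hcyc
  exact (h.rotate ha.le).false_of_right_eq_zero_pair (c := if a < c then c - a else c + n - a)
    (by grind) (by grind) (fun k hk => by rw [hW _ (by grind)]; grind)

end IsFreeTwoWheel

/-- The rim vertices `0` and `d` are neighbors of the center, and the `d - 1 ≥ 1` rim vertices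
strictly between them are not. -/
structure IsLongSector (n d : ℕ) (U : ℕ → Prop) : Prop where
  two_le : 2 ≤ d
  add_two_le : d + 2 ≤ n
  left : U 0
  right : U d
  interior : ∀ k, 0 < k → k < d → ¬U k

lemma IsLongSector.reflect {d : ℕ} (hs : IsLongSector n d U) :
    IsLongSector n d (fun k => U (rimReflect n d k)) := by
  obtain ⟨hd, hdn, h0, hd', hint⟩ := hs
  exact ⟨hd, hdn, by grind, by grind, by grind⟩

namespace IsFreeTwoWheel

variable {d : ℕ}

lemma false_of_right_eq_far_pair (h : IsFreeTwoWheel n U W) (hs : IsLongSector n d U) {c c' : ℕ}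
    (hcc' : c + 2 ≤ c') (hc' : c' ≤ d) (hW : ∀ k ≤ d, W k ↔ k = c ∨ k = c') : False := by
  obtain ⟨hd, hdn, hU0, hUd, hint⟩ := hs
  have center : HasInducedPath (twoWheelGraph n U W) c c' {c, n + 1, c'} :=
    (HasInducedPath.edge (by grind)).cons (by grind) (by grind)
  have inner : HasInducedPath (twoWheelGraph n U W) c c' (Set.Icc c c') :=
    .arc (by omega) (by omega) (by omega)
  have outer : HasInducedPath (twoWheelGraph n U W) c c'
      (insert 0 (insert n (Set.Icc c' d)) ∪ Set.Icc 0 c) :=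
    (((HasInducedPath.arc hc' (by omega) (by omega)).reverse.cons (x := n) (by grind)
      (by grind)).cons (x := 0) (by grind) (by grind)).climb c.zero_le (by grind) (by grind)
  exact h.free.theta (containsTheta_of_hasInducedPath (by omega) (by grind) center inner outer
    (by grind) (by grind) (by grind))

lemma ncard_right_sector_le_two_of_even (h : IsFreeTwoWheel n U W) (hs : IsLongSector n d U)
    (even : Even {k | k ≤ d ∧ W k}.ncard) : {k | k ≤ d ∧ W k}.ncard ≤ 2 := by
  by_contra! three_le
  obtain ⟨hd, hdn, hU0, hUd, hint⟩ := hs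
  let sectorHole (k : ℕ) : ℕ := if k ≤ d then k else n
  have adj_eq : {k | k < d + 2 ∧ (twoWheelGraph n U W).Adj (n + 1) (sectorHole k)} =
      {k | k ≤ d ∧ W k} := by
    ext k; grind
  refine h.free.evenWheel (containsEvenWheel_of_cycAdj (n := d + 2) (g := sectorHole)
    (c := n + 1) (by omega) (fun i hi j hj hij => by grind) (fun i hi j hj => ?_)
    (fun k _ => by grind) (adj_eq ▸ three_le) (adj_eq ▸ even))
  have hU (k : ℕ) (hk : k ≤ d) : U k ↔ k = 0 ∨ k = d := by grind
  grind

lemma exists_right_sector_eq_pair_of_even (h : IsFreeTwoWheel n U W) (hs : IsLongSector n d U)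
    (even : Even {k | k ≤ d ∧ W k}.ncard) (pos : 0 < {k | k ≤ d ∧ W k}.ncard) :
    ∃ c, c + 1 ≤ d ∧ ∀ k ≤ d, W k ↔ k = c ∨ k = c + 1 := by
  have le_two := h.ncard_right_sector_le_two_of_even hs even
  obtain ⟨a, b, hab, eq_pair⟩ := Set.ncard_eq_two.1
    (show {k | k ≤ d ∧ W k}.ncard = 2 by rcases even with ⟨r, hr⟩; omega)
  have hW (k : ℕ) : k ≤ d ∧ W k ↔ k = a ∨ k = b := by
    simpa using Set.ext_iff.1 eq_pair k
  wlog hlt : a < b generalizing a b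
  · exact this b a hab.symm (by rw [eq_pair, Set.pair_comm]) (by grind) (by omega)
  rcases Nat.lt_or_ge (a + 1) b with hfar | hnear
  · exact (h.false_of_right_eq_far_pair hs (c := a) (c' := b) hfar (by grind) (by grind)).elim
  · exact ⟨a, by grind, by grind⟩

lemma exists_right_eq_pair_insert (h : IsFreeTwoWheel n U W) (hs : IsLongSector n d U) {m : ℕ}
    (hdm : d < m) (hmn : m < n) (hW : ∀ k, d < k → k < n → (W k ↔ k = m)) :
    ∃ c, c + 1 ≤ d ∧ ∀ k < n, W k ↔ k = m ∨ k = c ∨ k = c + 1 := by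
  have insert_eq : {k | k < n ∧ W k} = insert m {k | k ≤ d ∧ W k} := by
    ext k
    simp only [Set.mem_insert_iff, Set.mem_ofPred_eq]
    grind
  have ncard_eq : {k | k < n ∧ W k}.ncard = {k | k ≤ d ∧ W k}.ncard + 1 := by
    rw [insert_eq, Set.ncard_insert_of_notMem (fun hm => by grind)
      ((Set.finite_Iic d).subset fun k hk => hk.1)]
  have three_le := h.three_le_right
  have odd := h.odd_ncard_right
  obtain ⟨c, hc, hWc⟩ := h.exists_right_sector_eq_pair_of_even hs (by grind) (by omega)
  exact ⟨c, hc, by grind⟩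

end IsFreeTwoWheel

/-- The two centers form a cousin wheel: `p q r s` is a path of the rim, the first center sees
exactly `p, q, r` and the second one exactly `q, r, s`. -/
def IsCousinPattern (n : ℕ) (U W : ℕ → Prop) : Prop :=
  ∃ p < n, ∃ q < n, ∃ r < n, ∃ s < n, (CycAdj n p q ∧ CycAdj n q r ∧ CycAdj n r s) ∧
    (p ≠ r ∧ q ≠ s) ∧ (∀ k < n, U k ↔ k = p ∨ k = q ∨ k = r) ∧
    ∀ k < n, W k ↔ k = q ∨ k = r ∨ k = s

namespace IsCousinPattern

lemma swap (h : IsCousinPattern n U W) : IsCousinPattern n W U := by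
  obtain ⟨p, hp, q, hq, r, hr, s, hs, ⟨hpq, hqr, hrs⟩, ⟨hpr, hqs⟩, hU, hW⟩ := h
  exact ⟨s, hs, r, hr, q, hq, p, hp, ⟨hrs.symm, hqr.symm, hpq.symm⟩, ⟨hqs.symm, hpr.symm⟩,
    fun k hk => by rw [hW k hk]; tauto, fun k hk => by rw [hU k hk]; tauto⟩

lemma of_reindex {σ : ℕ → ℕ} (hσ : IsRimSymmetry n σ)
    (h : IsCousinPattern n (fun k => U (σ k)) (fun k => W (σ k))) : IsCousinPattern n U W := by
  obtain ⟨p, hp, q, hq, r, hr, s, hs, ⟨hpq, hqr, hrs⟩, ⟨hpr, hqs⟩, hU, hW⟩ := h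
  have ext_iff (P : ℕ → Prop) (x y z : ℕ) (hx : x < n) (hy : y < n) (hz : z < n)
      (hP : ∀ k < n, P (σ k) ↔ k = x ∨ k = y ∨ k = z) (k : ℕ) (hk : k < n) :
      P k ↔ k = σ x ∨ k = σ y ∨ k = σ z := by
    obtain ⟨j, hj, rfl⟩ := hσ.bijOn.surjOn hk
    have eq_iff {i : ℕ} (hi : i < n) : σ j = σ i ↔ j = i := hσ.bijOn.injOn.eq_iff hj hi
    rw [hP j hj, eq_iff hx, eq_iff hy, eq_iff hz]
  have maps (k : ℕ) (hk : k < n) : σ k < n := hσ.bijOn.mapsTo hk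
  refine ⟨σ p, maps p hp, σ q, maps q hq, σ r, maps r hr, σ s, maps s hs,
    ⟨(hσ.cycAdj_iff _ hp _ hq).2 hpq, (hσ.cycAdj_iff _ hq _ hr).2 hqr,
      (hσ.cycAdj_iff _ hr _ hs).2 hrs⟩,
    ⟨hσ.bijOn.injOn.ne hp hr hpr, hσ.bijOn.injOn.ne hq hs hqs⟩, ext_iff U p q r hp hq hr hU,
    ext_iff W q r s hq hr hs hW⟩

end IsCousinPattern

namespace IsFreeTwoWheel

variable {d : ℕ}

lemma isCousinPattern_of_add_two_eq (h : IsFreeTwoWheel n U W) (hs : IsLongSector n d U)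
    (hdn : d + 2 = n) (hU : U (d + 1)) (hW : W (d + 1)) : IsCousinPattern n U W := by
  obtain ⟨c, hc, hWc⟩ := h.exists_right_eq_pair_insert hs (m := d + 1) (by omega) (by omega)
    (by grind)
  have hUk (k : ℕ) (hk : k < n) : U k ↔ k = 0 ∨ k = d ∨ k = d + 1 := by grind [IsLongSector]
  have hd := hs.two_le
  have c_eq : c = 0 ∨ c + 1 = d := by
    have := h.cycAdj_of_right_eq_triple (by omega) (by omega) hWc
    grind
  rcases c_eq with rfl | rfl
  · exact ⟨d, by omega, d + 1, by omega, 0, by omega, 1, by omega, by grind, by omega, by grind,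
      by grind⟩
  · exact ⟨0, by omega, c + 2, by omega, c + 1, by omega, c, by omega, by grind, by omega,
      by grind, by grind⟩

lemma isCousinPattern_of_right_outside_eq (h : IsFreeTwoWheel n U W) (hs : IsLongSector n d U)
    (hdn : d + 3 ≤ n) (hW : ∀ k, d < k → k < n → (W k ↔ k = d + 1)) :
    IsCousinPattern n U W := by
  obtain ⟨c, hc, hWc⟩ := h.exists_right_eq_pair_insert hs (by omega) (by omega) hW
  obtain rfl : c + 1 = d := by
    have := h.cycAdj_of_right_eq_triple (by omega) (by omega) hWc
    grind
  have hUc := hs.right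
  have rotated : IsLongSector n (n - 2) (fun k => W (rimRotate n (c + 2) k)) :=
    ⟨by omega, by omega, by grind, by grind, by grind⟩
  exact (IsCousinPattern.of_reindex (isRimSymmetry_rimRotate h.four_le (s := c + 2) (by omega))
    ((h.swap.rotate (by omega)).isCousinPattern_of_add_two_eq rotated (by omega) (by grind)
      (by grind))).swap

end IsFreeTwoWheel

/-! ### Paths joining the two centers -/

lemma exists_first_index {P : ℕ → Prop} {c : ℕ} (hc : P c) : ∃ k ≤ c, P k ∧ ∀ m < k, ¬P m := by
  classical
  exact ⟨Nat.find ⟨c, hc⟩, Nat.find_le hc, Nat.find_spec ⟨c, hc⟩, fun m => Nat.find_min ⟨c, hc⟩⟩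

lemma exists_last_index {P : ℕ → Prop} {c d : ℕ} (hcd : c ≤ d) (hc : P c) :
    ∃ k, c ≤ k ∧ k ≤ d ∧ P k ∧ ∀ m, k < m → m ≤ d → ¬P m := by
  classical
  exact ⟨Nat.findGreatest P d, Nat.le_findGreatest hcd hc, Nat.findGreatest_le d,
    Nat.findGreatest_spec hcd hc, fun m => Nat.findGreatest_is_greatest⟩

lemma exists_closest_indices {A B : ℕ → Prop} {i j : ℕ} (hi : A i) (hj : B j) :
    ∃ x ∈ Set.uIcc i j, ∃ y ∈ Set.uIcc i j, A x ∧ B y ∧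
      ∀ k ∈ Set.uIcc x y, (A k → k = x) ∧ (B k → k = y) := by
  wlog hij : i ≤ j generalizing A B i j
  · obtain ⟨y, hy, x, hx, hBy, hAx, hclosest⟩ := this hj hi (by omega)
    rw [Set.uIcc_comm] at hx hy
    exact ⟨x, hx, y, hy, hAx, hBy, fun k hk => (hclosest k (Set.uIcc_comm x y ▸ hk)).symm⟩
  obtain ⟨y, hyj, ⟨hiy, hBy⟩, hfirst⟩ := exists_first_index (P := fun k => i ≤ k ∧ B k) ⟨hij, hj⟩
  obtain ⟨x, hix, hxy, hAx, hlast⟩ := exists_last_index hiy hi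
  refine ⟨x, Set.mem_uIcc_of_le hix (hxy.trans hyj), y, Set.mem_uIcc_of_le hiy hyj, hAx, hBy,
    fun k hk => ?_⟩
  rw [Set.uIcc_of_le hxy] at hk
  grind

/-- The centers are joined by an induced path whose interior is an arc of the rim that contains no
vertex equal or adjacent to one of `0, …, d`. -/
def HasDetour (n d : ℕ) (U W : ℕ → Prop) : Prop :=
  ∃ x y, d + 2 ≤ x ∧ x ≤ y ∧ y + 2 ≤ n ∧
    HasInducedPath (twoWheelGraph n U W) n (n + 1) (insert n (insert (n + 1) (Set.Icc x y)))

lemma hasDetour_of_mem {d i j : ℕ} (hi : d + 2 ≤ i) (hin : i + 2 ≤ n) (hj : d + 2 ≤ j)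
    (hjn : j + 2 ≤ n) (hUi : U i) (hWj : W j) : HasDetour n d U W := by
  obtain ⟨x, hx, y, hy, hUx, hWy, hclosest⟩ := exists_closest_indices hUi hWj
  rw [Set.mem_uIcc] at hx hy
  have rim : HasInducedPath (twoWheelGraph n U W) x y (Set.Icc (min x y) (max x y)) := by
    rcases le_total x y with hxy | hxy
    · simpa [hxy] using .arc hxy (by omega) (by omega)
    · simpa [hxy] using (HasInducedPath.arc hxy (by omega) (by omega)).reverse
  rw [Set.uIcc] at hclosest
  exact ⟨min x y, max x y, by omega, by omega, by omega,
    ((rim.reverse.cons (x := n + 1) (by grind) (by grind)).reverse.cons (x := n) (by grind)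
      (by grind))⟩

namespace IsFreeTwoWheel

variable {c c' d : ℕ}

lemma false_of_hasDetour_of_right_sector_eq (h : IsFreeTwoWheel n U W) (hs : IsLongSector n d U)
    (hdet : HasDetour n d U W) (hc : 0 < c) (hcd : c < d) (hW : ∀ k ≤ d, W k ↔ k = c) :
    False := by
  obtain ⟨-, -, hU0, hUd, hint⟩ := hs
  obtain ⟨x, y, hx, hxy, hy, detour⟩ := hdet
  have left : HasInducedPath (twoWheelGraph n U W) n c (insert n (Set.Icc 0 c)) :=
    (HasInducedPath.arc (by omega) (by omega) (by omega)).cons (by grind) (by grind)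
  have right : HasInducedPath (twoWheelGraph n U W) n c (insert n (Set.Icc c d)) :=
    (HasInducedPath.arc (by omega) (by omega) (by omega)).reverse.cons (by grind) (by grind)
  have outer := detour.reverse.cons (x := c) (by grind) (by grind)
  exact h.free.theta (containsTheta_of_hasInducedPath (by omega) (by grind) left right
    outer.reverse (by grind) (by grind) (by grind))

lemma false_of_hasDetour_of_right_sector_eq_pair (h : IsFreeTwoWheel n U W)
    (hs : IsLongSector n d U) (hdet : HasDetour n d U W) (hcd : c < d)
    (hW : ∀ k ≤ d, W k ↔ k = c ∨ k = c + 1) : False := by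
  obtain ⟨hd, -, hU0, hUd, hint⟩ := hs
  obtain ⟨x, y, hx, hxy, hy, detour⟩ := hdet
  have left : HasInducedPath (twoWheelGraph n U W) n c (insert n (Set.Icc 0 c)) :=
    (HasInducedPath.arc (by omega) (by omega) (by omega)).cons (by grind) (by grind)
  have right : HasInducedPath (twoWheelGraph n U W) n (c + 1) (insert n (Set.Icc (c + 1) d)) :=
    (HasInducedPath.arc (by omega) (by omega) (by omega)).reverse.cons (by grind) (by grind)
  rcases c.eq_zero_or_pos with rfl | hc
  · exact h.free.pyramid (containsPyramid_of_hasInducedPath (by omega) (by omega) (by omega)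
      (by grind) (by grind) (by grind) (by grind) (by grind) left right detour
      (by grind) (by grind) (by grind))
  · exact h.free.pyramid (containsPyramid_of_hasInducedPath (by omega) (by omega) (by omega)
      (by grind) (by grind) (by grind) (by grind) (by grind) right left detour
      (by grind (splits := 12)) (by grind (splits := 12)) (by grind (splits := 12)))

lemma false_of_hasDetour_of_right_sector_far (h : IsFreeTwoWheel n U W)
    (hs : IsLongSector n d U) (hdet : HasDetour n d U W) (hcc' : c + 2 ≤ c') (hc' : c' ≤ d)
    (hWc : W c) (hWc' : W c') (hW : ∀ k ≤ d, W k → c ≤ k ∧ k ≤ c') : False := by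
  obtain ⟨-, -, hU0, hUd, hint⟩ := hs
  obtain ⟨x, y, hx, hxy, hy, detour⟩ := hdet
  have left : HasInducedPath (twoWheelGraph n U W) n c (insert n (Set.Icc 0 c)) :=
    (HasInducedPath.arc (by omega) (by omega) (by omega)).cons (by grind) (by grind)
  have right : HasInducedPath (twoWheelGraph n U W) n c' (insert n (Set.Icc c' d)) :=
    (HasInducedPath.arc (by omega) (by omega) (by omega)).reverse.cons (by grind) (by grind)
  have left' := left.reverse.cons (x := n + 1) (by grind) (by grind)
  have right' := right.reverse.cons (x := n + 1) (by grind) (by grind)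
  exact h.free.theta (containsTheta_of_hasInducedPath (by omega) (by grind) left'.reverse
    right'.reverse detour (by grind) (by grind) (by grind))

lemma not_hasDetour (h : IsFreeTwoWheel n U W) (hs : IsLongSector n d U) (hc : 0 < c)
    (hcd : c < d) (hWc : W c) : ¬HasDetour n d U W := by
  intro hdet
  obtain ⟨a, hac, hWa, hfirst⟩ := exists_first_index hWc
  obtain ⟨b, hcb, hbd, hWb, hlast⟩ := exists_last_index hcd.le hWc
  rcases (show a = b ∨ b = a + 1 ∨ a + 2 ≤ b by omega) with rfl | rfl | hab
  · exact h.false_of_hasDetour_of_right_sector_eq hs hdet (c := a) (by omega) (by omega)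
      (by grind)
  · exact h.false_of_hasDetour_of_right_sector_eq_pair hs hdet (c := a) (by omega) (by grind)
  · exact h.false_of_hasDetour_of_right_sector_far hs hdet hab hbd hWa hWb (by grind)

end IsFreeTwoWheel

/-! ### Crossing centers -/

/-- The rim splits into the two arcs `0, …, d` and `d + 1, …, n - 1` such that the first center
sees exactly the ends of the first arc, the second center sees exactly the ends of the second arc,
and each center has a neighbor in the interior of the arc whose ends the other one sees. -/
structure IsCrossing (n d : ℕ) (U W : ℕ → Prop) : Prop where
  sector : IsLongSector n d U
  add_four_le : d + 4 ≤ n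
  right_iff : ∀ k, d < k → k < n → (W k ↔ k = d + 1 ∨ k = n - 1)
  exists_right : ∃ c, 0 < c ∧ c < d ∧ W c
  exists_left : ∃ q, d + 1 < q ∧ q + 1 < n ∧ U q

lemma IsCrossing.reflect {d : ℕ} (hX : IsCrossing n d U W) :
    IsCrossing n d (fun k => U (rimReflect n d k)) (fun k => W (rimReflect n d k)) := by
  obtain ⟨hs, hdn, hW, ⟨c, hc, hcd, hWc⟩, q, hdq, hqn, hUq⟩ := hX
  exact ⟨hs.reflect, hdn, by grind, ⟨d - c, by omega, by omega, by grind⟩,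
    n + d - q, by omega, by omega, by grind⟩

namespace IsFreeTwoWheel

variable {d : ℕ}

lemma not_left_of_isCrossing (h : IsFreeTwoWheel n U W) (hX : IsCrossing n d U W)
    (hW0 : ¬W 0) (hUn : ¬U (n - 1)) : ¬U (d + 1) := by
  intro hU
  obtain ⟨⟨hd, -, hU0, -, hint⟩, hdn, hW, ⟨c₀, -, hcd, hWc₀⟩, -⟩ := hX
  obtain ⟨c, hc, hWc, hfirst⟩ := exists_first_index hWc₀
  have inner := (HasInducedPath.arc (n := n) (U := U) (W := W) c.zero_le (by omega)
    (by omega)).reverse.cons (x := n + 1) (by grind) (by grind)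
  have via_left : HasInducedPath (twoWheelGraph n U W) 0 (n + 1) {0, n, d + 1, n + 1} :=
    ((HasInducedPath.edge (by grind)).cons (by grind) (by grind)).cons (by grind) (by grind)
  have via_last : HasInducedPath (twoWheelGraph n U W) 0 (n + 1) {0, n - 1, n + 1} :=
    (HasInducedPath.edge (by grind)).cons (by grind) (by grind)
  exact h.free.theta (containsTheta_of_hasInducedPath (by omega) (by grind) inner.reverse
    via_left via_last (by grind) (by grind) (by grind))

lemma not_right_of_isCrossing (h : IsFreeTwoWheel n U W) (hX : IsCrossing n d U W)
    (hW0 : ¬W 0) (hUn : ¬U (n - 1)) : ¬W d := by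
  intro hWd
  obtain ⟨⟨hd, -, hU0, hUd, -⟩, hdn, hW, -, q₀, hdq, hqn, hUq₀⟩ := hX
  obtain ⟨q, hq, hqn, hUq, hlast⟩ := exists_last_index (d := n - 1) (by omega) hUq₀
  have q_ne : q ≠ n - 1 := by grind
  have inner := (HasInducedPath.arc (n := n) (U := U) (W := W) hqn (by omega)
    (by omega)).cons (x := n) (by grind) (by grind)
  have via_right : HasInducedPath (twoWheelGraph n U W) (n - 1) n {n - 1, n + 1, d, n} :=
    ((HasInducedPath.edge (by grind)).cons (by grind) (by grind)).cons (by grind) (by grind)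
  have via_zero : HasInducedPath (twoWheelGraph n U W) (n - 1) n {n - 1, 0, n} :=
    (HasInducedPath.edge (by grind)).cons (by grind) (by grind)
  exact h.free.theta (containsTheta_of_hasInducedPath (by omega) (by grind) inner.reverse
    via_right via_zero (by grind) (by grind) (by grind))

lemma false_of_isCrossing_of_private_ends (h : IsFreeTwoWheel n U W) (hX : IsCrossing n d U W)
    (hW0 : ¬W 0) (hUn : ¬U (n - 1)) : False := by
  have hU' := h.not_left_of_isCrossing hX hW0 hUn
  have hWd := h.not_right_of_isCrossing hX hW0 hUn
  obtain ⟨⟨hd, -, hU0, hUd, hint⟩, hdn, hW, ⟨c₀, hc₀, hcd, hWc₀⟩, -⟩ := hX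
  obtain ⟨c, hc, hcd, hWc, hlast⟩ := exists_last_index hcd.le hWc₀
  have c_ne : c ≠ d := by grind
  by_cases c_eq : c = 1
  · exact h.free.square (containsSquare_of_adj (a := n + 1) (b := 1) (c := 0) (d := n - 1)
      (by omega) (by omega) (by grind) (by grind) (by grind) (by grind) (by grind) (by grind))
  have inner := (HasInducedPath.arc (n := n) (U := U) (W := W) hcd (by omega)
    (by omega)).cons (x := n + 1) (by grind) (by grind)
  have via_left : HasInducedPath (twoWheelGraph n U W) (n + 1) d {n + 1, n - 1, 0, n, d} :=
    (((HasInducedPath.edge (by grind)).cons (by grind) (by grind)).cons (by grind)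
      (by grind)).cons (by grind) (by grind)
  have via_next : HasInducedPath (twoWheelGraph n U W) (n + 1) d {n + 1, d + 1, d} :=
    (HasInducedPath.edge (by grind)).cons (by grind) (by grind)
  exact h.free.theta (containsTheta_of_hasInducedPath (by omega) (by grind) inner
    via_left via_next (by grind (splits := 14)) (by grind) (by grind))

lemma not_isCrossing (h : IsFreeTwoWheel n U W) : ¬IsCrossing n d U W := by
  intro hX
  by_cases private_ends : ¬W 0 ∧ ¬U (n - 1)
  · exact h.false_of_isCrossing_of_private_ends hX private_ends.1 private_ends.2
  obtain ⟨⟨hd, -, hU0, hUd, -⟩, hdn, hW, -⟩ := id hX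
  have no_common (i j : ℕ) (hi : i = 0 ∨ i = n - 1) (hj : j = d ∨ j = d + 1) (hUi : U i)
      (hWi : W i) : ¬(U j ∧ W j) := fun hcommon => by
    have := h.cycAdj_of_common (a := i) (b := j) (by omega) (by omega) (by omega) hUi hWi
      hcommon.1 hcommon.2
    grind
  refine (h.reflect (by omega)).false_of_isCrossing_of_private_ends hX.reflect ?_ ?_ <;> grind

end IsFreeTwoWheel

/-! ### The dichotomy -/

/-- The vertices `a < b` split the rim into two arcs such that the first center only sees the arc
`a, …, b` and the second center only sees the complementary arc from `b` through `0` to `a`. -/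
structure IsNestedBetween (n : ℕ) (U W : ℕ → Prop) (a b : ℕ) : Prop where
  lt : a < b
  lt_rim : b < n
  left : ∀ k < n, U k → a ≤ k ∧ k ≤ b
  right : ∀ k < n, W k → k ≤ a ∨ b ≤ k

namespace IsFreeTwoWheel

variable {d : ℕ}

lemma left_last_of_forall_not_left (h : IsFreeTwoWheel n U W) (hs : IsLongSector n d U)
    (hout : ∀ k, d + 2 ≤ k → k + 2 ≤ n → ¬U k) : U (n - 1) := by
  by_contra hU
  obtain ⟨hd, hdn, hU0, hUd, hint⟩ := hs
  obtain ⟨k, hk, hUk, hk0, hkd⟩ := h.swap.exists_right_ne 0 d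
  have := h.swap.cycAdj_of_right_eq_triple (a := 0) (c := d) (by omega) (by omega)
    (fun k hk => by grind)
  grind

lemma left_next_of_forall_not_left (h : IsFreeTwoWheel n U W) (hs : IsLongSector n d U)
    (hout : ∀ k, d + 2 ≤ k → k + 2 ≤ n → ¬U k) : U (d + 1) := by
  have hdn := hs.add_two_le
  have := (h.reflect (d := d) (by omega)).left_last_of_forall_not_left hs.reflect
    (fun k hk hkn => by grind)
  grind

lemma add_two_eq_of_forall_not_left (h : IsFreeTwoWheel n U W) (hs : IsLongSector n d U)
    (hout : ∀ k, d + 2 ≤ k → k + 2 ≤ n → ¬U k) : d + 2 = n := by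
  have next := h.left_next_of_forall_not_left hs hout
  have last := h.left_last_of_forall_not_left hs hout
  obtain ⟨hd, hdn, hU0, hUd, hint⟩ := hs
  by_contra hne
  have eq_four : {k | k < n ∧ U k} = ({0, d, d + 1, n - 1} : Finset ℕ) := by
    ext k
    simp only [Set.mem_ofPred_eq, Finset.coe_insert, Finset.coe_singleton, Set.mem_insert_iff,
      Set.mem_singleton_iff]
    grind
  have odd := h.swap.odd_ncard_right
  have card_eq : ({0, d, d + 1, n - 1} : Finset ℕ).card = 4 := by
    rw [Finset.card_insert_of_notMem (by grind), Finset.card_insert_of_notMem (by grind),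
      Finset.card_pair (by omega)]
  rw [eq_four, Set.ncard_coe_finset, card_eq] at odd
  exact absurd odd (by decide)

lemma isCousinPattern_of_isLongSector (h : IsFreeTwoWheel n U W) (hs : IsLongSector n d U)
    {c m : ℕ} (hc : 0 < c) (hcd : c < d) (hWc : W c) (hdm : d < m) (hmn : m < n) (hWm : W m) :
    IsCousinPattern n U W := by
  by_cases hout : ∀ k, d + 2 ≤ k → k + 2 ≤ n → ¬U k
  · have hdn := h.add_two_eq_of_forall_not_left hs hout
    obtain rfl : m = d + 1 := by omega
    exact h.isCousinPattern_of_add_two_eq hs hdn (h.left_next_of_forall_not_left hs hout) hWm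
  push Not at hout
  obtain ⟨q, hdq, hqn, hUq⟩ := hout
  have hW (k : ℕ) (hk : d + 2 ≤ k) (hkn : k + 2 ≤ n) : ¬W k := fun hWk =>
    h.not_hasDetour hs hc hcd hWc (hasDetour_of_mem hdq hqn hk hkn hUq hWk)
  by_cases next : W (d + 1)
  · by_cases last : W (n - 1)
    · exact (h.not_isCrossing ⟨hs, by omega, by grind, ⟨c, hc, hcd, hWc⟩,
        q, by omega, by omega, hUq⟩).elim
    · exact h.isCousinPattern_of_right_outside_eq hs (by omega) (by grind)
  · have hd : d < n := by omega
    exact .of_reindex (isRimSymmetry_rimReflect h.four_le hd)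
      ((h.reflect hd).isCousinPattern_of_right_outside_eq hs.reflect (by omega) (by grind))

lemma isCousinPattern_or_isNestedBetween (h : IsFreeTwoWheel n U W) (hW : W 0) (hU : ¬U 0) :
    IsCousinPattern n U W ∨ ∃ a b, IsNestedBetween n U W a b := by
  obtain ⟨k, hk, hUk, -⟩ := h.swap.exists_right_ne 0 0
  obtain ⟨a, hak, hUa, hfirst⟩ := exists_first_index hUk
  obtain ⟨b, hkb, hbn, hUb, hlast⟩ := exists_last_index (d := n - 1) (by omega) hUk
  by_cases hcross : ∃ m, a < m ∧ m < b ∧ W m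
  · obtain ⟨m, ham, hmb, hWm⟩ := hcross
    have a_ne_zero : a ≠ 0 := by grind
    have rotated : IsLongSector n (a + n - b) (fun k => U (rimRotate n b k)) :=
      ⟨by omega, by omega, by grind, by grind, by grind⟩
    exact .inl (.of_reindex (isRimSymmetry_rimRotate h.four_le (by omega))
      ((h.rotate (s := b) (by omega)).isCousinPattern_of_isLongSector rotated (c := n - b)
        (m := m + n - b) (by omega) (by omega) (by grind) (by omega) (by omega) (by grind)))
  · obtain ⟨j, hj, hUj, hja, -⟩ := h.swap.exists_right_ne a a
    exact .inr ⟨a, b, by grind, by omega, by grind, by grind⟩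

lemma not_isNestedBetween_of_cycAdj (h : IsFreeTwoWheel n U W) {a b : ℕ} (hab : CycAdj n a b) :
    ¬IsNestedBetween n U W a b := by
  rintro ⟨hlt, -, hU, hW⟩
  obtain ⟨i, hi, hUi, hia, hib⟩ := h.swap.exists_right_ne a b
  obtain ⟨j, hj, hWj, hja, hjb⟩ := h.exists_right_ne a b
  grind

lemma common_subsingleton_of_isNestedBetween (h : IsFreeTwoWheel n U W) {a b : ℕ}
    (hN : IsNestedBetween n U W a b) : {k | k < n ∧ U k ∧ W k}.Subsingleton := by
  rintro i ⟨hi, hUi, hWi⟩ j ⟨hj, hUj, hWj⟩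
  by_contra hij
  have hcyc := h.cycAdj_of_common hi hj hij hUi hWi hUj hWj
  refine h.not_isNestedBetween_of_cycAdj (a := a) (b := b) ?_ hN
  obtain ⟨-, -, hU, hW⟩ := hN
  grind

end IsFreeTwoWheel

/-! ### Two-wheels in a graph -/

/-- The neighborhood of `w` on the rim `f`, in the coordinates `0, …, n - 1` that start at the
base vertex `f s`. -/
def spokes (G : SimpleGraph α) (f : ZMod n → α) (s : ZMod n) (w : α) (k : ℕ) : Prop :=
  G.Adj w (f (s + k))

lemma natCast_injOn_Iio (n : ℕ) : Set.InjOn (Nat.cast : ℕ → ZMod n) (Set.Iio n) :=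
  fun i hi j hj hij => by
    rw [← ZMod.val_cast_of_lt hi, ← ZMod.val_cast_of_lt hj, hij]

section Spokes

variable {f : ZMod n → α} {u v w : α}

lemma spokes_val_sub [NeZero n] (s m : ZMod n) :
    spokes G f s w (m - s).val ↔ G.Adj w (f m) := by
  rw [spokes, ZMod.natCast_zmod_val, add_sub_cancel]

lemma ncard_spokes [NeZero n] (s : ZMod n) :
    {k | k < n ∧ spokes G f s w k}.ncard = {m : ZMod n | G.Adj w (f m)}.ncard := by
  rw [← ncard_setOf_val n (spokes G f s w),
    ← Set.ncard_image_of_injective _ (add_right_injective s)]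
  congr 1
  ext m
  constructor
  · rintro ⟨k, hk, rfl⟩
    simpa [spokes] using hk
  · exact fun hm => ⟨m - s, (spokes_val_sub s m).2 hm, add_sub_cancel s m⟩

lemma adj_add_natCast_iff (hf : IsHoleEmb G n f) (s : ZMod n) {i j : ℕ} (hi : i < n)
    (hj : j < n) : G.Adj (f (s + i)) (f (s + j)) ↔ CycAdj n i j := by
  have hn := hf.1
  rw [hf.2.2, add_assoc, add_assoc, add_right_inj, add_right_inj, ← cycAdj_val_iff (by omega),
    ZMod.val_cast_of_lt hi, ZMod.val_cast_of_lt hj]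

lemma isSupportEmbedding_twoWheelGraph_spokes (hf : IsHoleEmb G n f) (hne : u ≠ v)
    (hu : u ∉ Set.range f) (hv : v ∉ Set.range f) (huv : ¬G.Adj u v) (s : ZMod n) :
    IsSupportEmbedding (twoWheelGraph n (spokes G f s u) (spokes G f s v)) G
      (fun k => if k < n then f (s + k) else if k = n then u else v) := by
  have ne_u (k : ℕ) : f (s + k) ≠ u := fun h => hu ⟨_, h⟩
  have ne_v (k : ℕ) : f (s + k) ≠ v := fun h => hv ⟨_, h⟩
  clear hu hv
  constructor
  · intro i hi j hj hij
    have inj (hi : i < n) (hj : j < n) (h : f (s + i) = f (s + j)) : i = j :=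
      natCast_injOn_Iio n hi hj (add_left_cancel (hf.2.1 h))
    have := lt_of_mem_support_twoWheelGraph hi
    have := lt_of_mem_support_twoWheelGraph hj
    grind
  · intro i hi j hj
    have hij (hi : i < n) (hj : j < n) := adj_add_natCast_iff hf s hi hj
    have adj_left (w : α) (k : ℕ) : G.Adj w (f (s + k)) ↔ spokes G f s w k := Iff.rfl
    have adj_right (w : α) (k : ℕ) : G.Adj (f (s + k)) w ↔ spokes G f s w k := G.adj_comm _ _
    have irrefl (w : α) : ¬G.Adj w w := G.irrefl
    have hvu : ¬G.Adj v u := fun h => huv h.symm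
    have hn := hf.1
    rcases lt_of_mem_support_twoWheelGraph hi with hi | rfl | rfl <;>
      rcases lt_of_mem_support_twoWheelGraph hj with hj | rfl | rfl <;>
      grind

lemma isFreeTwoWheel_spokes (hG : ObstructionFree G) (hW : Is2WheelCfg G n f u v)
    (huv : ¬G.Adj u v) (s : ZMod n) :
    IsFreeTwoWheel n (spokes G f s u) (spokes G f s v) := by
  obtain ⟨hf, hne, hu, hv, hu3, hv3⟩ := hW
  have : NeZero n := ⟨by have := hf.1; omega⟩
  exact ⟨hf.1, hG.of_isSupportEmbedding
    (isSupportEmbedding_twoWheelGraph_spokes hf hne hu hv huv s),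
    by rwa [ncard_spokes], by rwa [ncard_spokes]⟩

lemma nestedCfg_of_isNestedBetween {s : ZMod n} {a b : ℕ}
    (hN : IsNestedBetween n (spokes G f s u) (spokes G f s v) a b) : NestedCfg G n f u v := by
  obtain ⟨hab, hbn, hu, hv⟩ := hN
  have : NeZero n := ⟨by omega⟩
  have eq_add (m : ZMod n) : m = s + ((m - s).val : ZMod n) := by simp
  refine ⟨s + a, b - a, by omega, by omega, fun m hm => ?_, fun m hm => ?_⟩
  · obtain ⟨hak, hkb⟩ := hu _ (m - s).val_lt ((spokes_val_sub s m).2 hm)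
    refine ⟨(m - s).val - a, by omega, ?_⟩
    rw [add_assoc, ← Nat.cast_add, Nat.add_sub_cancel' hak, ← eq_add]
  · have hk := (m - s).val_lt
    rcases hv _ hk ((spokes_val_sub s m).2 hm) with hka | hbk
    · refine ⟨(m - s).val + n - b, by omega, ?_⟩
      rw [add_assoc, add_assoc, ← Nat.cast_add, ← Nat.cast_add,
        show a + (b - a + ((m - s).val + n - b)) = (m - s).val + n by omega, Nat.cast_add,
        ZMod.natCast_self, add_zero, ← eq_add]
    · refine ⟨(m - s).val - b, by omega, ?_⟩
      rw [add_assoc, add_assoc, ← Nat.cast_add, ← Nat.cast_add,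
        show a + (b - a + ((m - s).val - b)) = (m - s).val by omega, ← eq_add]

lemma exists_isNestedBetween_of_nestedCfg (hN : NestedCfg G n f u v) :
    ∃ s d, IsNestedBetween n (spokes G f s u) (spokes G f s v) 0 d := by
  obtain ⟨s, d, hd, hdn, hu, hv⟩ := hN
  have eq_of_cast {k e : ℕ} (hk : k < n) (he : e < n) (h : (k : ZMod n) = e) : k = e :=
    natCast_injOn_Iio n hk he h
  refine ⟨s, d, hd, hdn, fun k hk huk => ⟨k.zero_le, ?_⟩, fun k hk hvk => ?_⟩
  · obtain ⟨e, hed, h⟩ := hu _ huk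
    rwa [eq_of_cast hk (by omega) (add_left_cancel h)]
  · obtain ⟨e, hed, h⟩ := hv _ hvk
    rw [add_assoc, ← Nat.cast_add] at h
    have h := add_left_cancel h
    rcases Nat.lt_or_ge (d + e) n with hlt | hge
    · have := eq_of_cast hk hlt h
      omega
    · rw [show d + e = n by omega, ZMod.natCast_self, ← Nat.cast_zero] at h
      exact .inl (eq_of_cast hk (by omega) h).le

lemma spokes_triple_iff {s : ZMod n} {x y z : ℕ} [NeZero n] (hx : x < n) (hy : y < n) (hz : z < n)
    (h : ∀ k < n, spokes G f s w k ↔ k = x ∨ k = y ∨ k = z) (m : ZMod n) :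
    G.Adj w (f m) ↔ m = s + x ∨ m = s + y ∨ m = s + z := by
  have val_eq_iff {k : ℕ} (hk : k < n) : (m - s).val = k ↔ m = s + k := by
    rw [← sub_eq_iff_eq_add', ← (ZMod.val_injective n).eq_iff, ZMod.val_cast_of_lt hk]
  rw [← spokes_val_sub s m, h _ (m - s).val_lt, val_eq_iff hx, val_eq_iff hy, val_eq_iff hz]

lemma cousinCfg_of_isCousinPattern {s : ZMod n} (hn : 2 ≤ n)
    (hC : IsCousinPattern n (spokes G f s u) (spokes G f s v)) : CousinCfg G n f u v := by
  have : NeZero n := ⟨by omega⟩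
  obtain ⟨p, hp, q, hq, r, hr, t, ht, ⟨hpq, hqr, hrt⟩, ⟨hpr, hqt⟩, hu, hv⟩ := hC
  have step {i j : ℕ} (hi : i < n) (hj : j < n) (hij : CycAdj n i j) :
      s + (j : ZMod n) = s + i + 1 ∨ s + (i : ZMod n) = s + j + 1 := by
    rw [add_assoc, add_assoc, add_right_inj, add_right_inj, ← cycAdj_val_iff hn,
      ZMod.val_cast_of_lt hi, ZMod.val_cast_of_lt hj]
    exact hij
  have shift_ne {i j : ℕ} (hi : i < n) (hj : j < n) (hij : i ≠ j) : s + (i : ZMod n) ≠ s + j :=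
    fun h => hij (natCast_injOn_Iio n hi hj (add_left_cancel h))
  have hu := spokes_triple_iff hp hq hr hu
  have hv := spokes_triple_iff hq hr ht hv
  have hpr := shift_ne hp hr hpr
  have hqt := shift_ne hq ht hqt
  rcases step hp hq hpq with hpq | hqp
  · have hqr := (step hq hr hqr).resolve_right (by grind)
    have hrt := (step hr ht hrt).resolve_right (by grind)
    exact .inl ⟨s + p, by grind, by grind⟩
  · have hrq := (step hq hr hqr).resolve_left (by grind)
    have htr := (step hr ht hrt).resolve_left (by grind)
    exact .inr ⟨s + t, by grind, by grind⟩

lemma nestedCfg_or_cousinCfg (hG : ObstructionFree G) (hW : Is2WheelCfg G n f u v)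
    (huv : ¬G.Adj u v) : NestedCfg G n f u v ∨ CousinCfg G n f u v := by
  have hn := hW.1.1
  obtain ⟨k, -, hv, hu⟩ := (isFreeTwoWheel_spokes hG hW huv 0).exists_right_not_left
  rw [spokes, zero_add] at hu hv
  rcases (isFreeTwoWheel_spokes hG hW huv k).isCousinPattern_or_isNestedBetween
    (by simpa [spokes]) (by simpa [spokes]) with cousin | ⟨a, b, nested⟩
  · exact .inr (cousinCfg_of_isCousinPattern (by omega) cousin)
  · exact .inl (nestedCfg_of_isNestedBetween nested)

lemma ncard_common_le_one_of_nestedCfg (hG : ObstructionFree G) (hW : Is2WheelCfg G n f u v)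
    (huv : ¬G.Adj u v) (hN : NestedCfg G n f u v) :
    {m : ZMod n | G.Adj u (f m) ∧ G.Adj v (f m)}.ncard ≤ 1 := by
  have : NeZero n := ⟨by have := hW.1.1; omega⟩
  obtain ⟨s, d, nested⟩ := exists_isNestedBetween_of_nestedCfg hN
  have unique :=
    (isFreeTwoWheel_spokes hG hW huv s).common_subsingleton_of_isNestedBetween nested
  have mem {m : ZMod n} (hm : G.Adj u (f m) ∧ G.Adj v (f m)) :
      (m - s).val ∈ {k | k < n ∧ spokes G f s u k ∧ spokes G f s v k} :=
    ⟨(m - s).val_lt, (spokes_val_sub s m).2 hm.1, (spokes_val_sub s m).2 hm.2⟩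
  rw [Set.ncard_le_one_iff_subsingleton]
  exact fun i hi j hj => sub_left_injective (ZMod.val_injective n (unique (mem hi) (mem hj)))

end Spokes

end TwoWheel

theorem statement6_general {α : Type} (G : SimpleGraph α)
    (hTheta : ¬ContainsTheta G) (hPyr : ¬ContainsPyramid G)
    (hEW : ¬ContainsEvenWheel G) (hSq : ¬ContainsSquare G)
    (n : ℕ) (f : ZMod n → α) (u v : α)
    (hW : Is2WheelCfg G n f u v) (huv : ¬G.Adj u v) :
    (NestedCfg G n f u v ∨ CousinCfg G n f u v) ∧
    (NestedCfg G n f u v → {m : ZMod n | G.Adj u (f m) ∧ G.Adj v (f m)}.ncard ≤ 1) :=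
  have hG : ObstructionFree G := ⟨hTheta, hPyr, hEW, hSq⟩
  ⟨nestedCfg_or_cousinCfg hG hW huv, ncard_common_le_one_of_nestedCfg hG hW huv⟩

/-- In a (theta, prism, pyramid, even wheel, square)-free graph, every
2-wheel with non-adjacent centers is a nested wheel or a cousin wheel; moreover a nested
such 2-wheel satisfies `|N_H(u) ∩ N_H(v)| ≤ 1`. -/
theorem statement6 (G : SimpleGraph V)
    (hTheta : ¬ContainsTheta G) (hPrism : ¬ContainsPrism G) (hPyr : ¬ContainsPyramid G)
    (hEW : ¬ContainsEvenWheel G) (hSq : ¬ContainsSquare G)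
    (n : ℕ) (f : ZMod n → V) (u v : V)
    (hW : Is2WheelCfg G n f u v) (huv : ¬G.Adj u v) :
    (NestedCfg G n f u v ∨ CousinCfg G n f u v) ∧
    (NestedCfg G n f u v → {m : ZMod n | G.Adj u (f m) ∧ G.Adj v (f m)}.ncard ≤ 1) :=
  statement6_general G hTheta hPyr hEW hSq n f u v hW huv
end
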